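/- Let g = s ⋉ h be a finite-dimensional sympathetic complex Lie algebra that is not semisimple, with simple Levi subalgebra s, whose radical h decomposes into simple s-modules satisfying the convention, and assume that if this decomposition has 5 or more summands then Z(h) is irreducible as an s-module. Then dim_C g ≥ 15. -/

import Mathlib

namespace Symp

variable (g : Type*) [LieRing g] [LieAlgebra ℂ g]

/-- A derivation of `g` is inner if it is given by the adjoint action of some element. -/
def IsInnerDer {g : Type*} [LieRing g] [LieAlgebra ℂ g] (D : LieDerivation ℂ g g) : Prop :=
  ∃ x : g, ∀ y : g, D y = ⁅x, y⁆

/-- `g` is perfect: `[g,g] = g`. -/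
def IsPerfectLie : Prop :=
  ⁅(⊤ : LieIdeal ℂ g), (⊤ : LieIdeal ℂ g)⁆ = ⊤

/-- A sympathetic Lie algebra: trivial centre, perfect, all derivations inner. -/
def IsSympathetic : Prop :=
  LieAlgebra.center ℂ g = ⊥ ∧ IsPerfectLie g ∧
    ∀ D : LieDerivation ℂ g g, IsInnerDer D

/-- `s` is a simple Levi subalgebra of `g`: it is a simple Lie algebra and a vector-space
complement to the radical. -/
def IsSimpleLevi (s : LieSubalgebra ℂ g) : Prop :=
  LieAlgebra.IsSimple ℂ s ∧
    IsCompl s.toSubmodule (LieAlgebra.radical ℂ g).toSubmodule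

/-- `s` is a Levi subalgebra of `g` isomorphic to `sl₂(ℂ)`. -/
def IsSl2Levi (s : LieSubalgebra ℂ g) : Prop :=
  Nonempty (s ≃ₗ⁅ℂ⁆ LieAlgebra.SpecialLinear.sl (Fin 2) ℂ) ∧
    IsCompl s.toSubmodule (LieAlgebra.radical ℂ g).toSubmodule

/-- The subspace spanned by all brackets `⁅x, y⁆` with `x ∈ A`, `y ∈ B`. -/
def lieSpan2 (A B : Submodule ℂ g) : Submodule ℂ g :=
  Submodule.span ℂ {z : g | ∃ x ∈ A, ∃ y ∈ B, z = ⁅x, y⁆}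

/-- A subspace of `g` invariant under the bracket action of the subalgebra `s`. -/
def Invariant (s : LieSubalgebra ℂ g) (W : Submodule ℂ g) : Prop :=
  ∀ x ∈ s, ∀ w ∈ W, ⁅x, w⁆ ∈ W

/-- `V` is an irreducible `s`-submodule of `g`. -/
def IsIrreducibleSMod (s : LieSubalgebra ℂ g) (V : Submodule ℂ g) : Prop :=
  V ≠ ⊥ ∧ Invariant g s V ∧
    ∀ W : Submodule ℂ g, W ≤ V → Invariant g s W → W = ⊥ ∨ W = V

/-- The family `V` is a decomposition of the radical of `g` into irreducible `s`-modules. -/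
def IsDecomp (s : LieSubalgebra ℂ g) {k : ℕ} (V : Fin k → Submodule ℂ g) : Prop :=
  (∀ i, IsIrreducibleSMod g s (V i)) ∧ iSupIndep V ∧
    (⨆ i, V i) = (LieAlgebra.radical ℂ g).toSubmodule

/-- The convention: any nonzero bracket of two of the modules equals one of them,
for a unique index. -/
def Convention {k : ℕ} (V : Fin k → Submodule ℂ g) : Prop :=
  ∀ i j, lieSpan2 g (V i) (V j) ≠ ⊥ → ∃! q, lieSpan2 g (V i) (V j) = V q

/-- The centre `Z(h)` of the radical `h = Rad(g)`, as a subspace of `g`. -/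
def centerRad : Submodule ℂ g where
  carrier := {x | x ∈ LieAlgebra.radical ℂ g ∧ ∀ y ∈ LieAlgebra.radical ℂ g, ⁅x, y⁆ = 0}
  add_mem' := by
    rintro a b ⟨ha, ha'⟩ ⟨hb, hb'⟩
    exact ⟨add_mem ha hb, fun y hy => by rw [add_lie, ha' y hy, hb' y hy, add_zero]⟩
  zero_mem' := ⟨zero_mem _, fun y _ => zero_lie y⟩
  smul_mem' := by
    rintro c a ⟨ha, ha'⟩
    exact ⟨SMulMemClass.smul_mem c ha, fun y hy => by rw [smul_lie, ha' y hy, smul_zero]⟩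

/-- The derived subalgebra `[h,h]` of the radical `h = Rad(g)`, as a subspace of `g`. -/
def derivedRad : Submodule ℂ g :=
  lieSpan2 g (LieAlgebra.radical ℂ g).toSubmodule (LieAlgebra.radical ℂ g).toSubmodule

end Symp


namespace SympAux

/-- nested depth predicate -/
def Dp {ι : Type*} (R : ι → ι → ι → Prop) : ℕ → ι → Prop
  | 0, _ => True
  | m + 1, q => ∃ i j, Dp R m j ∧ R i j q

/-- The combinatorial properties of a bracket table. -/
structure Sys {ι : Type*} [Fintype ι] (n : ι → ℕ) (R : ι → ι → ι → Prop) : Prop where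
  npos : ∀ i, 1 ≤ n i
  sym : ∀ {i j q}, R i j q → R j i q
  func : ∀ {i j q q'}, R i j q → R i j q' → q = q'
  jac : ∀ {i j l m r}, R j l m → R i m r →
    (∃ p, R i j p ∧ R p l r) ∨ (∃ p, R i l p ∧ R p j r)
  nil : ∃ N, ∀ q, ¬ Dp R N q
  perf : ∀ i, (∀ a b, ¬ R a b i) → 2 ≤ n i
  cen : ∀ i, n i = 1 → ∃ j q, R i j q
  wt : ∀ w : ι → ℤ, (∀ i j q, R i j q → w i + w j = w q) → ∀ i, w i = 0
  ne : Nonempty ι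

/-- The extra properties for Levi factor `sl₂`. -/
structure Sys2 {ι : Type*} [Fintype ι] (n : ι → ℕ) (R : ι → ι → ι → Prop) : Prop
    extends Sys n R where
  T1 : ∀ {i j q}, R i j q → n i = 1 → n q = n j
  T2 : ∀ {i j q}, R i j q → n q = 1 → n i = n j
  L2 : ∀ {i q}, R i i q → n i = 2 → n q = 1
  L3 : ∀ {i q}, R i i q → n i = 3 → n q = 3
  al : ∀ {u w t y}, R u w t → n t = 1 → u ≠ w → 2 ≤ n u → R u t y → ∃ p, R u u p ∧ R p w y
  al2 : ∀ {u t y}, R u u t → n t = 1 → R u t y → n u < 3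
  par : ∀ {i j q}, R i j q → (n i + n j + n q) % 2 = 1
  gam : ∀ {a b c z}, n b = 3 → n a = 2 → n c = 2 → n z = 2 → R b a c → R b c z → ∃ q, R b b q
  del : ∀ {a t c r}, n a = 2 → R a a t → n t = 1 → R a t c → R a c r → n r ≠ 1
  fg : ∀ a b c z : ι, (∀ i, i = a ∨ i = b ∨ i = c ∨ i = z ∨ n i = 1) →
    n a = 2 → n b = 2 → n c = 2 → n z = 2 → c ≠ z →
    (∀ i q, ¬ R z i q) →
    (∀ t g q, n t = 1 → (g = a ∨ g = b) → R t g q → q = c ∨ q = z) →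
    (∀ g t g' y, (g = a ∨ g = b) → (g' = a ∨ g' = b) → R c g t → R t g' y → y = z) →
    (∃ g g' g'' t, (g = a ∨ g = b) ∧ (g' = a ∨ g' = b) ∧ (g'' = a ∨ g'' = b) ∧ 
      n t = 1 ∧ R g' g'' t ∧ R t g c) →
    (∃ g g' t, (g = a ∨ g = b) ∧ (g' = a ∨ g' = b) ∧ n t = 1 ∧ R c g t ∧ R t g' z) → False
  sum : ∑ i, n i ≤ 11

namespace Sys
open Classical

variable {ι : Type*} [Fintype ι] {n : ι → ℕ} {R : ι → ι → ι → Prop} 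

theorem Dp_succ {R : ι → ι → ι → Prop} : ∀ {m q}, Dp R (m + 1) q → Dp R m q
  | 0, _, _ => trivial
  | m + 1, _, ⟨i, j, hj, h⟩ => ⟨i, j, Dp_succ hj, h⟩

theorem Dp_anti {R : ι → ι → ι → Prop} {a b : ℕ} {q : ι} (hab : a ≤ b) (h : Dp R b q) : Dp R a q := by
  induction hab with
  | refl => exact h
  | step _ ih => exact ih (Dp_succ h)

/-- depth -/
noncomputable def dep (h : Sys n R) (q : ι) : ℕ :=
  Nat.find (p := fun m => ¬ Dp R m q) (h.nil.imp fun _ hN => hN q)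

theorem dep_iff (h : Sys n R) {m : ℕ} {q : ι} : Dp R m q ↔ m < h.dep q := by
  constructor
  · intro hm
    by_contra hlt
    have := Nat.find_spec (p := fun m => ¬ Dp R m q) (h.nil.imp fun _ hN => hN q)
    exact this (Dp_anti (not_lt.1 hlt) hm)
  · intro hm
    have := Nat.find_min (p := fun m => ¬ Dp R m q) (h.nil.imp fun _ hN => hN q) hm
    simpa using this

theorem dep_pos (h : Sys n R) (q : ι) : 1 ≤ h.dep q := (h.dep_iff (m := 0)).1 trivial

theorem Dp_add (h : Sys n R) : ∀ {a b i j q}, Dp R a i → Dp R b j → R i j q → Dp R (a + b + 1) q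
  | 0, b, i, j, q, _, hj, hr => by
      rw [Nat.zero_add]; exact ⟨i, j, hj, hr⟩
  | a + 1, b, i, j, q, ⟨x, y, hy, hx⟩, hj, hr => by
      rcases h.jac hx (h.sym hr) with ⟨p, h1, h2⟩ | ⟨p, h1, h2⟩
      · have hp : Dp R (b + 1) p := ⟨x, j, hj, h.sym h1⟩
        have := Dp_add h hy hp (h.sym h2)
        rwa [show a + 1 + b + 1 = a + (b + 1) + 1 by ring]
      · have hp := Dp_add h hy hj (h.sym h1)
        rw [show a + 1 + b + 1 = (a + b + 1) + 1 by ring]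
        exact ⟨x, p, hp, h.sym h2⟩

theorem d1 (h : Sys n R) {i j q} (hr : R i j q) : h.dep i + h.dep j ≤ h.dep q := by
  have hi := h.dep_pos i
  have hj := h.dep_pos j
  have := h.Dp_add (h.dep_iff.2 (Nat.sub_lt hi one_pos)) (h.dep_iff.2 (Nat.sub_lt hj one_pos)) hr
  rw [dep_iff h] at this
  omega

theorem d2 (h : Sys n R) {q} (hq : 2 ≤ h.dep q) :
    ∃ g x, h.dep g = 1 ∧ h.dep x + 1 = h.dep q ∧ R g x q := by
  obtain ⟨m, hm⟩ : ∃ m, h.dep q = m + 2 := ⟨h.dep q - 2, by omega⟩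
  have : Dp R (m + 1) q := h.dep_iff.2 (by omega)
  obtain ⟨i, j, hj, hr⟩ := this
  rw [h.dep_iff] at hj
  have := h.d1 hr
  have := h.dep_pos i
  exact ⟨i, j, by omega, by omega, hr⟩

theorem gen2 (h : Sys n R) {i} (hi : h.dep i = 1) : 2 ≤ n i := by
  apply h.perf
  intro a b hr
  have := h.d1 hr
  have := h.dep_pos a
  have := h.dep_pos b
  omega

theorem d3 (h : Sys n R) (w : ι → ℤ)
    (hw : ∀ g x q, h.dep g = 1 → R g x q → w g + w x = w q) :
    ∀ N i j q, h.dep i ≤ N → R i j q → w i + w j = w q := by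
  intro N
  induction N with
  | zero => intro i j q hi; have := h.dep_pos i; omega
  | succ N ih =>
    intro i j q hi hr
    by_cases h1 : h.dep i = 1
    · exact hw _ _ _ h1 hr
    · have := h.dep_pos i
      obtain ⟨g, x, hg, hx, hgx⟩ := h.d2 (q := i) (by omega)
      have e := hw _ _ _ hg hgx
      rcases h.jac hgx (h.sym hr) with ⟨p, h1, h2⟩ | ⟨p, h1, h2⟩
      · have a1 := hw _ _ _ hg (h.sym h1)
        have a2 := ih _ _ _ (by omega) (h.sym h2)
        linarith
      · have a1 := hw _ _ _ hg (h.sym h2)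
        have a2 := ih _ _ _ (by omega) (h.sym h1)
        linarith

theorem wt' (h : Sys n R) (w : ι → ℤ)
    (hw : ∀ g x q, h.dep g = 1 → R g x q → w g + w x = w q) (i : ι) : w i = 0 :=
  h.wt w (fun i j q hr => h.d3 w hw _ i j q le_rfl hr) i

theorem d4 (h : Sys n R) : ∀ N i j q, h.dep j ≤ N → R i j q → ∃ g q, h.dep g = 1 ∧ R i g q := by
  intro N
  induction N with
  | zero => intro i j q hi; have := h.dep_pos j; omega
  | succ N ih =>
    intro i j q hi hr
    by_cases h1 : h.dep j = 1
    · exact ⟨_, _, h1, hr⟩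
    · have := h.dep_pos j
      obtain ⟨g, x, hg, hx, hgx⟩ := h.d2 (q := j) (by omega)
      rcases h.jac hgx hr with ⟨p, h1, h2⟩ | ⟨p, h1, h2⟩
      · exact ⟨_, _, hg, h1⟩
      · exact ih _ _ _ (by omega) h1

theorem cen' (h : Sys n R) {i} (hi : n i = 1) : ∃ g q, h.dep g = 1 ∧ R g i q := by
  obtain ⟨j, q, hr⟩ := h.cen i hi
  obtain ⟨g, q, h1, h2⟩ := h.d4 _ _ _ _ le_rfl hr
  exact ⟨g, q, h1, h.sym h2⟩

theorem lev (h : Sys n R) {m : ℕ} (hm : 1 ≤ m) {q} (hq : m ≤ h.dep q) : ∃ y, h.dep y = m := by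
  obtain ⟨k, hk⟩ : ∃ k, h.dep q = m + k := ⟨h.dep q - m, by omega⟩
  clear hq
  induction k generalizing q with
  | zero => exact ⟨q, hk⟩
  | succ k ih =>
    obtain ⟨g, x, hg, hx, hgx⟩ := h.d2 (q := q) (by omega)
    exact ih (q := x) (by omega)

theorem jump (h : Sys n R) : ∃ g x q, h.dep g = 1 ∧ R g x q ∧ h.dep x + 2 ≤ h.dep q := by
  by_contra hc
  push Not at hc
  obtain ⟨i⟩ := h.ne
  have := h.wt' (fun i => (h.dep i : ℤ)) (fun g x q hg hr => by
    have h1 := hc g x q hg hr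
    have h2 := h.d1 hr
    have : h.dep q = h.dep g + h.dep x := by omega
    simp only [this]; push_cast; rfl) i
  have h3 := h.dep_pos i
  simp at this
  omega

theorem uniq (h : Sys n R) {A} (hA : ∀ i, h.dep i = 1 → i = A) :
    ∀ N x y, h.dep x = N → h.dep y = N → x = y := by
  intro N
  induction N with
  | zero => intro x y hx; have := h.dep_pos x; omega
  | succ N ih =>
    intro x y hx hy
    by_cases h0 : N = 0
    · subst h0; rw [hA x hx, hA y hy]
    · obtain ⟨g, a, hg, ha, hga⟩ := h.d2 (q := x) (by omega)
      obtain ⟨g', a', hg', ha', hga'⟩ := h.d2 (q := y) (by omega)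
      have e := ih a a' (by omega) (by omega)
      rw [hA _ hg, e] at hga
      rw [hA _ hg'] at hga'
      exact h.func hga hga'

theorem twogen (h : Sys n R) : ∃ A B, A ≠ B ∧ h.dep A = 1 ∧ h.dep B = 1 := by
  obtain ⟨g, x, q, hg, hr, hd⟩ := h.jump
  by_contra hc
  push Not at hc
  have hA : ∀ i, h.dep i = 1 → i = g := by
    intro i hi
    by_contra hne
    exact hc i g hne hi hg
  have h1 := h.dep_pos x
  obtain ⟨y, hy⟩ := h.lev (m := h.dep x + 1) (by omega) (q := q) (by omega)
  obtain ⟨g', x', hg', hx', hr'⟩ := h.d2 (q := y) (by omega)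
  have : x' = x := h.uniq hA _ _ _ (by omega) rfl
  rw [hA _ hg', this] at hr'
  have := h.func hr hr'
  rw [this] at hd
  omega

end Sys
end SympAux


namespace SympAux
namespace Sys2
open Classical

variable {ι : Type*} [Fintype ι] {n : ι → ℕ} {R : ι → ι → ι → Prop} 

theorem cnt (h : Sys2 n R) (S : Finset ι) (hS : ∀ i ∈ S, 2 ≤ n i) :
    2 * S.card + (Finset.univ.filter fun i => n i % 2 = 1).card ≤ 11 := by
  have h1 : ∀ i, (if i ∈ S then 2 else 0) + (if n i % 2 = 1 then 1 else 0) ≤ n i := by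
    intro i
    have := h.npos i
    split_ifs with h1 h2
    · have := hS i h1; omega
    · have := hS i h1; omega
    · omega
    · omega
  have h2 := Finset.sum_le_sum (s := Finset.univ) fun i _ => h1 i
  rw [Finset.sum_add_distrib] at h2
  have h3 := h.sum
  simp only [Finset.sum_ite_mem, Finset.univ_inter, Finset.sum_const, smul_eq_mul,
    Finset.sum_boole] at h2
  simp at h2
  omega

theorem sumS (h : Sys2 n R) (S : Finset ι) : ∑ i ∈ S, n i ≤ 11 :=
  (Finset.sum_le_sum_of_subset (Finset.subset_univ S)).trans h.sum

theorem pw (h : Sys2 n R) {i} (hi : n i % 2 = 0) :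
    ∃ g x q, h.dep g = 1 ∧ R g x q ∧ n g % 2 = 0 ∧ n x % 2 = 0 := by
  by_contra hc
  push Not at hc
  have := h.wt' (fun i => if n i % 2 = 0 then 1 else 0) (fun g x q hg hr => by
    have h1 := hc g x q hg hr
    have h2 := h.par hr
    split_ifs <;> first | rfl | omega) i
  simp [hi] at this

theorem evenE (h : Sys2 n R) (hE : ∀ i, h.dep i = 1 → n i % 2 = 0) :
    ∀ N i, h.dep i = N → (n i + h.dep i) % 2 = 1 := by
  intro N
  induction N with
  | zero => intro i hi; have := h.dep_pos i; omega
  | succ N ih =>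
    intro i hi
    by_cases h1 : h.dep i = 1
    · have := hE i h1; omega
    · have := h.dep_pos i
      obtain ⟨g, x, hg, hx, hgx⟩ := h.d2 (q := i) (by omega)
      have := ih x (by omega)
      have := h.par hgx
      have := hE g hg
      omega

theorem allodd (h : Sys2 n R) (hE : ∀ i, h.dep i = 1 → n i % 2 = 1) :
    ∀ N i, h.dep i = N → n i % 2 = 1 := by
  intro N
  induction N with
  | zero => intro i hi; have := h.dep_pos i; omega
  | succ N ih =>
    intro i hi
    by_cases h1 : h.dep i = 1
    · have := hE i h1; omega
    · have := h.dep_pos i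
      obtain ⟨g, x, hg, hx, hgx⟩ := h.d2 (q := i) (by omega)
      have := ih x (by omega)
      have := h.par hgx
      have := hE g hg
      omega

theorem jumpE (h : Sys2 n R) (hE : ∀ i, h.dep i = 1 → n i % 2 = 0) :
    ∃ g x q, h.dep g = 1 ∧ R g x q ∧ h.dep x + 3 ≤ h.dep q := by
  obtain ⟨g, x, q, hg, hr, hd⟩ := h.jump
  have := h.evenE hE _ x rfl
  have := h.evenE hE _ q rfl
  have := hE g hg
  have := h.par hr
  exact ⟨g, x, q, hg, hr, by omega⟩

theorem top (h : Sys2 n R) : ∃ Z, (∀ i, h.dep i ≤ h.dep Z) ∧ 2 ≤ n Z ∧ (∀ i q, ¬ R Z i q) ∧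
    3 ≤ h.dep Z := by
  have := h.ne
  obtain ⟨Z, -, hZ⟩ := Finset.exists_max_image Finset.univ h.dep Finset.univ_nonempty
  have hc : ∀ i q, ¬ R Z i q := by
    intro i q hr
    have := h.d1 hr
    have := h.dep_pos i
    have := hZ q (Finset.mem_univ _)
    omega
  refine ⟨Z, fun i => hZ i (Finset.mem_univ _), ?_, hc, ?_⟩
  · by_contra hlt
    have := h.npos Z
    obtain ⟨j, q, hr⟩ := h.cen Z (by omega)
    exact hc _ _ hr
  · obtain ⟨g, x, q, hg, hr, hd⟩ := h.jump
    have := h.dep_pos x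
    have := hZ q (Finset.mem_univ _)
    omega

theorem sum3 (h : Sys2 n R) {a b c : ι} (h1 : a ≠ b) (h2 : a ≠ c) (h3 : b ≠ c) :
    n a + n b + n c ≤ 11 := by
  have := h.sumS {a, b, c}
  rw [Finset.sum_insert (by simp [*]), Finset.sum_insert (by simp [*]), Finset.sum_singleton] at this
  omega

theorem sum4 (h : Sys2 n R) {a b c d : ι} (h1 : a ≠ b) (h2 : a ≠ c) (h3 : b ≠ c)
    (h4 : a ≠ d) (h5 : b ≠ d) (h6 : c ≠ d) :
    n a + n b + n c + n d ≤ 11 := by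
  have := h.sumS {a, b, c, d}
  rw [Finset.sum_insert (by simp [*]), Finset.sum_insert (by simp [*]),
    Finset.sum_insert (by simp [*]), Finset.sum_singleton] at this
  omega

theorem sum5 (h : Sys2 n R) {a b c d e : ι} (h1 : a ≠ b) (h2 : a ≠ c) (h3 : b ≠ c)
    (h4 : a ≠ d) (h5 : b ≠ d) (h6 : c ≠ d) (h7 : a ≠ e) (h8 : b ≠ e) (h9 : c ≠ e) (h10 : d ≠ e) :
    n a + n b + n c + n d + n e ≤ 11 := by
  have := h.sumS {a, b, c, d, e}
  rw [Finset.sum_insert (by simp [*]), Finset.sum_insert (by simp [*]),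
    Finset.sum_insert (by simp [*]), Finset.sum_insert (by simp [*]), Finset.sum_singleton] at this
  omega

theorem sum6 (h : Sys2 n R) {a b c d e f : ι} (h1 : a ≠ b) (h2 : a ≠ c) (h3 : b ≠ c)
    (h4 : a ≠ d) (h5 : b ≠ d) (h6 : c ≠ d) (h7 : a ≠ e) (h8 : b ≠ e) (h9 : c ≠ e) (h10 : d ≠ e)
    (h11 : a ≠ f) (h12 : b ≠ f) (h13 : c ≠ f) (h14 : d ≠ f) (h15 : e ≠ f) :
    n a + n b + n c + n d + n e + n f ≤ 11 := by
  have := h.sumS {a, b, c, d, e, f}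
  rw [Finset.sum_insert (by simp [*]), Finset.sum_insert (by simp [*]),
    Finset.sum_insert (by simp [*]), Finset.sum_insert (by simp [*]),
    Finset.sum_insert (by simp [*]), Finset.sum_singleton] at this
  omega

theorem neD (h : Sys2 n R) {a b : ι} (hd : h.dep a ≠ h.dep b) : a ≠ b := by
  rintro rfl; exact hd rfl

/-- Case X: all nontrivial modules are generators or top elements. -/
theorem caseX (h : Sys2 n R) {Z} (hZ : ∀ i, h.dep i ≤ h.dep Z) (hZ3 : 3 ≤ h.dep Z)
    (hX : ∀ i, 2 ≤ n i → h.dep i = 1 ∨ h.dep i = h.dep Z) : False := by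
  have triv : ∀ i, h.dep i ≠ 1 → h.dep i ≠ h.dep Z → n i = 1 := by
    intro i h1 h2
    have := h.npos i
    by_contra hne
    rcases hX i (by omega) with h3 | h3 <;> omega
  have ntop : ∀ i, n i = 1 → h.dep i ≠ h.dep Z := by
    intro i hi hd
    obtain ⟨g, q, hg, hr⟩ := h.cen' hi
    have := h.d1 hr
    have := hZ q
    omega
  have tdep : ∀ i, n i = 1 → h.dep i = 2 := by
    intro i hi
    have h0 := ntop i hi
    have h1 : h.dep i ≠ 1 := fun h1 => by have := h.gen2 h1; omega
    have := h.dep_pos i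
    obtain ⟨g, x, hg, hx, hr⟩ := h.d2 (q := i) (by omega)
    have h2 := h.T2 hr hi
    have h3 := h.gen2 hg
    have := hZ i
    rcases hX x (by omega) with h4 | h4 <;> omega
  have c3 : h.dep Z = 3 := by
    by_contra hne
    obtain ⟨y, hy⟩ := h.lev (m := 3) (by omega) hZ3
    have := tdep y (triv y (by omega) (by omega))
    omega
  have key : ∀ U W T X Q, n T = 1 → R U W T → R X T Q → n U = 2 ∧ n W = 2 ∧ n X = 2 ∧ n Q = 2 := by
    intro U W T X Q hT hUW hXQ
    have dT := tdep T hT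
    have h1 := h.d1 hUW
    have h2 := h.d1 hXQ
    have h3 := hZ Q
    have := h.dep_pos U
    have := h.dep_pos W
    have := h.dep_pos X
    have gU := h.gen2 (i := U) (by omega)
    have gW := h.gen2 (i := W) (by omega)
    have gX := h.gen2 (i := X) (by omega)
    have e1 := h.T2 hUW hT
    have e2 := h.T1 (h.sym hXQ) hT
    have e3 : n U = n Q := by
      rcases h.jac hUW hXQ with ⟨p, p1, p2⟩ | ⟨p, p1, p2⟩
      · have := h.d1 p1
        have := h.d1 p2
        have := h.T1 p2 (triv p (by omega) (by omega))
        omega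
      · have := h.d1 p1
        have := h.d1 p2
        have := h.T1 p2 (triv p (by omega) (by omega))
        omega
    suffices n U < 3 by omega
    by_contra hge
    have hUT : U ≠ T := h.neD (by omega)
    have hWT : W ≠ T := h.neD (by omega)
    have hXT : X ≠ T := h.neD (by omega)
    have hUQ : U ≠ Q := h.neD (by omega)
    have hWQ : W ≠ Q := h.neD (by omega)
    have hXQ' : X ≠ Q := h.neD (by omega)
    have hTQ : T ≠ Q := h.neD (by omega)
    by_cases hu : U = W
    · subst hu
      by_cases hx : X = U
      · subst hx
        exact hge (h.al2 hUW hT hXQ)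
      · have := h.sum4 hx hXQ' hUQ hXT hUT hTQ.symm
        have := h.L3 hUW (by omega)
        omega
    · have s4 := h.sum4 hu hUQ hWQ hUT hWT hTQ.symm
      by_cases hx : X = U
      · subst hx
        obtain ⟨p, p1, p2⟩ := h.al hUW hT hu (by omega) hXQ
        have := h.L3 p1 (by omega)
        have := h.d1 p1
        have := h.d1 p2
        have := triv p (by omega) (by omega)
        omega
      by_cases hx' : X = W
      · subst hx'
        obtain ⟨p, p1, p2⟩ := h.al (h.sym hUW) hT (Ne.symm hu) (by omega) hXQ
        have := h.L3 p1 (by omega)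
        have := h.d1 p1
        have := h.d1 p2
        have := triv p (by omega) (by omega)
        omega
      have := h.sum4 hu hUQ hWQ (Ne.symm hx) (Ne.symm hx') hXQ'.symm
      omega
  have key3 : ∀ Q, h.dep Q = 3 → n Q = 2 := by
    intro Q hQ
    obtain ⟨X, T, hX, hT, hr⟩ := h.d2 (q := Q) (by omega)
    obtain ⟨U, W, hU, hW, hr'⟩ := h.d2 (q := T) (by omega)
    exact (key U W T X Q (triv T (by omega) (by omega)) hr' hr).2.2.2
  have := h.wt' (fun i => if h.dep i = 1 then (if n i % 2 = 0 then 1 else 2) else h.dep i) ?_ Z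
  · simp [c3] at this
  · intro g x q hg hr
    have h1 := h.d1 hr
    have h2 := hZ q
    have h3 := h.dep_pos x
    have h4 := h.par hr
    simp only [hg, if_true]
    rcases (show h.dep q = 2 ∨ h.dep q = 3 by omega) with hq | hq
    · have hx : h.dep x = 1 := by omega
      have hq1 := triv q (by omega) (by omega)
      obtain ⟨X, Q, hX, hr'⟩ := h.cen' hq1
      have := key g x q X Q hq1 hr hr'
      simp [this, hx, hq]
    · have hq2 := key3 q hq
      rcases (show h.dep x = 1 ∨ h.dep x = 2 by omega) with hx | hx
      · simp only [hx, hq, if_true]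
        split_ifs <;> first | omega | norm_num
      · obtain ⟨U, W, hU, hW, hr'⟩ := h.d2 (q := x) (by omega)
        have := key U W x g q (triv x (by omega) (by omega)) hr' hr
        simp [this, hx, hq]

/-- at least five nontrivial modules -/
theorem caseY5 (h : Sys2 n R) (S : Finset ι) (hS : ∀ i ∈ S, 2 ≤ n i) (h5 : 5 ≤ S.card) : False := by
  have h1 := h.cnt S hS
  have hu : ∀ i j, n i % 2 = 1 → n j % 2 = 1 → i = j := by
    intro i j hi hj
    have := Finset.card_le_one.1 (show (Finset.univ.filter fun i => n i % 2 = 1).card ≤ 1 by omega)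
    exact this i (by simp [hi]) j (by simp [hj])
  by_cases hE : ∀ i, h.dep i = 1 → n i % 2 = 0
  · obtain ⟨g, x, q, hg, hr, hd⟩ := h.jumpE hE
    have := h.dep_pos x
    obtain ⟨y, hy⟩ := h.lev (m := 2) (by omega) (q := q) (by omega)
    obtain ⟨z, hz⟩ := h.lev (m := 4) (by omega) (q := q) (by omega)
    have e1 := h.evenE hE _ y rfl
    have e2 := h.evenE hE _ z rfl
    have := hu y z (by omega) (by omega)
    rw [this] at hy
    omega
  · push Not at hE
    obtain ⟨O, hO, hO'⟩ := hE
    obtain ⟨A, B, hAB, hA, hB⟩ := h.twogen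
    obtain ⟨i, hi⟩ : ∃ i, n i % 2 = 0 := by
      by_contra hc
      push Not at hc
      exact hAB (hu A B (by have := hc A; omega) (by have := hc B; omega))
    obtain ⟨g, x, q, hg, hr, h3, h4⟩ := h.pw hi
    have := h.par hr
    have := hu q O (by omega) (by omega)
    subst this
    have := h.d1 hr
    have := h.dep_pos x
    omega

end Sys2
end SympAux


namespace SympAux
open Classical

/-- Setting of case Y4 -/
structure Y4 {ι : Type*} [Fintype ι] {n : ι → ℕ} {R : ι → ι → ι → Prop} (h : Sys2 n R)
    (A B C Z : ι) : Prop where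
  AB : A ≠ B
  dA : h.dep A = 1
  dB : h.dep B = 1
  dC : 2 ≤ h.dep C
  dCZ : h.dep C < h.dep Z
  hZ : ∀ i, h.dep i ≤ h.dep Z
  nC : 2 ≤ n C
  nZ : 2 ≤ n Z
  cZ : ∀ i q, ¬ R Z i q
  Z3 : 3 ≤ h.dep Z
  all : ∀ i, i = A ∨ i = B ∨ i = C ∨ i = Z ∨ n i = 1

namespace Y4
variable {ι : Type*} [Fintype ι] {n : ι → ℕ} {R : ι → ι → ι → Prop} {h : Sys2 n R} {A B C Z : ι}

theorem symm (y : Y4 h A B C Z) : Y4 h B A C Z where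
  AB := y.AB.symm
  dA := y.dB
  dB := y.dA
  dC := y.dC
  dCZ := y.dCZ
  hZ := y.hZ
  nC := y.nC
  nZ := y.nZ
  cZ := y.cZ
  Z3 := y.Z3
  all := fun i => by rcases y.all i with h | h | h | h | h <;> tauto

theorem nA (y : Y4 h A B C Z) : 2 ≤ n A := h.gen2 y.dA
theorem nB (y : Y4 h A B C Z) : 2 ≤ n B := h.gen2 y.dB
theorem AC (y : Y4 h A B C Z) : A ≠ C := h.neD (by have := y.dA; have := y.dC; omega)
theorem AZ (y : Y4 h A B C Z) : A ≠ Z := h.neD (by have := y.dA; have := y.Z3; omega)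
theorem BC (y : Y4 h A B C Z) : B ≠ C := y.symm.AC
theorem BZ (y : Y4 h A B C Z) : B ≠ Z := y.symm.AZ
theorem CZ (y : Y4 h A B C Z) : C ≠ Z := h.neD (by have := y.dCZ; omega)
theorem cZ' (y : Y4 h A B C Z) (i q : ι) : ¬ R i Z q := fun hr => y.cZ _ _ (h.sym hr)

theorem gen (y : Y4 h A B C Z) {g} (hg : h.dep g = 1) : g = A ∨ g = B := by
  rcases y.all g with rfl | rfl | rfl | rfl | h1
  · simp
  · simp
  · have := y.dC; omega
  · have := y.Z3; omega
  · have := h.gen2 hg; omega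

/-- an output of a bracket -/
theorem out (y : Y4 h A B C Z) {i j q} (hr : R i j q) : q = C ∨ q = Z ∨ n q = 1 := by
  have := h.d1 hr
  have := h.dep_pos i
  have := h.dep_pos j
  have := y.dA
  have := y.dB
  rcases y.all q with rfl | rfl | rfl | rfl | h1
  · omega
  · omega
  all_goals simp [*]

theorem ndep (h : Sys2 n R) {i j q} (hr : R i j q) : i ≠ q ∧ j ≠ q := by
  have := h.d1 hr
  have := h.dep_pos i
  have := h.dep_pos j
  exact ⟨h.neD (by omega), h.neD (by omega)⟩

theorem neT {a t : ι} (ha : 2 ≤ n a) (ht : n t = 1) : a ≠ t := by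
  rintro rfl; omega

theorem s4 (y : Y4 h A B C Z) : n A + n B + n C + n Z ≤ 11 :=
  h.sum4 y.AB y.AC y.BC y.AZ y.BZ y.CZ

theorem s5 (y : Y4 h A B C Z) {t} (ht : n t = 1) : n A + n B + n C + n Z + 1 ≤ 11 := by
  have := h.sum5 y.AB y.AC y.BC y.AZ y.BZ y.CZ (neT y.nA ht) (neT y.nB ht) (neT y.nC ht) (neT y.nZ ht)
  omega

theorem s6 (y : Y4 h A B C Z) {t t'} (ht : n t = 1) (ht' : n t' = 1) (hne : t ≠ t') :
    n A + n B + n C + n Z + 2 ≤ 11 := by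
  have := h.sum6 y.AB y.AC y.BC y.AZ y.BZ y.CZ (neT y.nA ht) (neT y.nB ht) (neT y.nC ht) (neT y.nZ ht)
    (neT y.nA ht') (neT y.nB ht') (neT y.nC ht') (neT y.nZ ht') hne
  omega

theorem wts (y : Y4 h A B C Z) (a b c z t : ℤ) (ha : a ≠ 0)
    (hw : ∀ w : ι → ℤ, w A = a → w B = b → w C = c → w Z = z → (∀ i, n i = 1 → w i = t) →
      ∀ g x q, (g = A ∨ g = B) → R g x q → w g + w x = w q) : False := by
  let w : ι → ℤ := fun i => if i = A then a else if i = B then b else if i = C then c else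
    if i = Z then z else t
  have hwA : w A = a := by simp [w]
  have := h.wt' w (fun g x q hg hr => hw w hwA (by simp [w, y.AB.symm])
    (by simp [w, y.AC.symm, y.BC.symm]) (by simp [w, y.AZ.symm, y.BZ.symm, y.CZ.symm])
    (fun i hi => by simp [w, (neT y.nA hi).symm, (neT y.nB hi).symm, (neT y.nC hi).symm,
      (neT y.nZ hi).symm]) g x q (y.gen hg) hr) A
  exact ha (hwA ▸ this)

/-- both generators odd -/
theorem oo (y : Y4 h A B C Z) (hA : n A % 2 = 1) (hB : n B % 2 = 1) : False := by
  have : ∀ i, n i % 2 = 1 := fun i => h.allodd (fun i hi => by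
    rcases y.gen hi with rfl | rfl <;> assumption) _ i rfl
  have h1 := this C
  have h2 := this Z
  have := y.s4
  have := y.nA
  have := y.nB
  have := y.nC
  have := y.nZ
  omega

theorem ee4 (y : Y4 h A B C Z) (hA : n A = 2) (hB : n B = 2) (hC : n C = 2)
    (hZ : n Z = 3) (dC : h.dep C = 3) (dZ : h.dep Z = 4) (hABZ : R A B Z) {T} (hT : R A A T) : False := by
  have nT := h.L2 hT hA
  -- B kills brackets of A with A
  have hBT : ∀ q, ¬ R B T q := by
    intro q hr
    rcases h.jac hT hr with ⟨p, p1, p2⟩ | ⟨p, p1, p2⟩ <;>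
    · rw [← h.func hABZ (h.sym p1)] at p2
      exact y.cZ _ _ p2
  have ev : ∀ {g t q}, n g = 2 → n t = 1 → R g t q → q = C := by
    intro g t q hg ht hr
    have := h.T1 (h.sym hr) ht
    rcases y.out hr with rfl | rfl | hq
    · rfl
    · omega
    · omega
  have hATC : R A T C := by
    obtain ⟨g, q, hg, hr⟩ := h.cen' nT
    rcases y.gen hg with rfl | rfl
    · have := ev hA nT hr
      rwa [this] at hr
    · exact absurd hr (hBT q)
  have hBC : ∀ q, ¬ R B C q := by
    intro q hr
    rcases h.jac hATC hr with ⟨p, p1, p2⟩ | ⟨p, p1, p2⟩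
    · rw [← h.func hABZ (h.sym p1)] at p2
      exact y.cZ _ _ p2
    · exact hBT _ p1
  have trivdep : ∀ x, n x = 1 → h.dep x < h.dep Z := by
    intro x hx
    obtain ⟨g, q, hg, hr⟩ := h.cen' hx
    have := h.d1 hr
    have := y.hZ q
    omega
  have hACn : ∀ q, R A C q → q = Z := by
    intro q hr
    rcases y.out hr with rfl | rfl | hq
    · exact absurd rfl (ndep h hr).2
    · rfl
    · exfalso
      obtain ⟨g, q', hg, hr'⟩ := h.cen' hq
      have : q' = C := by
        rcases y.gen hg with rfl | rfl
        · exact ev hA hq hr'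
        · exact ev hB hq hr'
      subst this
      have := h.d1 hr
      have := h.d1 hr'
      omega
  have hACZ : R A C Z := by
    obtain ⟨g, x, hg, hx, hr⟩ := h.d2 (q := Z) (by omega)
    have dx : h.dep x = 3 := by omega
    have := y.dA
    have := y.dB
    have ng : n g = 2 := by rcases y.gen hg with rfl | rfl <;> assumption
    rcases y.all x with rfl | rfl | rfl | rfl | h1
    · omega
    · omega
    · rcases y.gen hg with rfl | rfl
      · exact hr
      · exact absurd hr (hBC _)
    · omega
    · have := h.T1 (h.sym hr) h1
      omega
  have hBB : ∀ t, ¬ R B B t := by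
    intro t hr
    have nt := h.L2 hr hB
    have hAt : ∀ q, ¬ R A t q := by
      intro q hr'
      rcases h.jac hr hr' with ⟨p, p1, p2⟩ | ⟨p, p1, p2⟩ <;>
      · rw [← h.func hABZ p1] at p2
        exact y.cZ _ _ p2
    obtain ⟨g, q, hg, hr'⟩ := h.cen' nt
    rcases y.gen hg with rfl | rfl
    · exact hAt _ hr'
    · have := ev hB nt hr'
      subst this
      rcases h.jac hr' hACZ with ⟨p, p1, p2⟩ | ⟨p, p1, p2⟩
      · rw [← h.func hABZ p1] at p2
        exact y.cZ _ _ p2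
      · exact hAt _ p1
  have trow : ∀ t, n t = 1 → t = T := by
    intro t nt
    by_contra hne
    have h1 : h.dep t ≠ 1 := fun h1 => by have := h.gen2 h1; omega
    have := h.dep_pos t
    obtain ⟨g, x, hg, hx, hr⟩ := h.d2 (q := t) (by omega)
    rcases y.gen hg with rfl | rfl <;> rcases y.all x with rfl | rfl | rfl | rfl | nx
    · exact hne (h.func hr hT)
    · have := h.func hr hABZ
      subst this; omega
    · have := hACn _ hr
      subst this; omega
    · exact y.cZ' _ _ hr
    · have := ev hA nx hr
      subst this; omega
    · have := h.func (h.sym hr) hABZ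
      subst this; omega
    · exact hBB _ hr
    · exact hBC _ hr
    · exact y.cZ' _ _ hr
    · have := ev hB nx hr
      subst this; omega
  refine y.wts 1 3 3 4 2 one_ne_zero ?_
  intro w wA wB wC wZ wt g x q hg hr
  rcases hg with rfl | rfl <;> rcases y.all x with rfl | rfl | rfl | rfl | nx
  · have := h.func hr hT
    subst this; rw [wA, wt _ nT]; rfl
  · have := h.func hr hABZ
    subst this; rw [wA, wB, wZ]; rfl
  · have := hACn _ hr
    subst this; rw [wA, wC, wZ]; rfl
  · exact absurd hr (y.cZ' _ _)
  · have := ev hA nx hr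
    subst this; rw [wA, wt _ nx, wC]; rfl
  · have := h.func (h.sym hr) hABZ
    subst this; rw [wA, wB, wZ]; rfl
  · exact absurd hr (hBB _)
  · exact absurd hr (hBC _)
  · exact absurd hr (y.cZ' _ _)
  · rw [trow x nx] at hr
    exact absurd hr (hBT _)

/-- both generators even -/
theorem ee (y : Y4 h A B C Z) (hA : n A % 2 = 0) (hB : n B % 2 = 0) : False := by
  have hE : ∀ i, h.dep i = 1 → n i % 2 = 0 := fun i hi => by
    rcases y.gen hi with rfl | rfl <;> assumption
  have par := fun i => h.evenE hE _ i rfl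
  obtain ⟨g, x, q, hg, hr, hd⟩ := h.jumpE hE
  have hx0 := h.dep_pos x
  have hqZ := y.hZ q
  have nA := y.nA
  have nB := y.nB
  have nC := y.nC
  have nZ := y.nZ
  have dA := y.dA
  have dB := y.dB
  have dCZ := y.dCZ
  have lev3 : ∀ x, h.dep x = 3 → x = C := by
    intro x hx
    have := par x
    rcases y.all x with rfl | rfl | rfl | rfl | h1
    all_goals first | rfl | omega
  have dC : h.dep C = 3 := by
    obtain ⟨x, hx⟩ := h.lev (m := 3) (by omega) (q := Z) (by omega)
    rw [← lev3 x hx, hx]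
  have c5 : h.dep Z ≤ 5 := by
    by_contra hc
    obtain ⟨x, hx⟩ := h.lev (m := 5) (by omega) (q := Z) (by omega)
    have := par x
    rcases y.all x with rfl | rfl | rfl | rfl | h1 <;> omega
  have pC := par C
  have pZ := par Z
  obtain ⟨T, hT⟩ := h.lev (m := 2) (by omega) (q := Z) (by omega)
  have nT : n T = 1 := by
    rcases y.all T with rfl | rfl | rfl | rfl | h1 <;> omega
  have s5 := y.s5 nT
  obtain ⟨g', g'', hg', hg'', hrT⟩ := h.d2 (q := T) (by omega)
  obtain ⟨g3, T', hg3, hT', hrC⟩ := h.d2 (q := C) (by omega)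
  rcases (show h.dep Z = 4 ∨ h.dep Z = 5 by omega) with c4 | c5
  · have hq : q = Z := by
      rcases y.all q with rfl | rfl | rfl | rfl | h1
      · omega
      · omega
      · omega
      · rfl
      · have := h.cen' h1
        obtain ⟨g, q', hg, hr'⟩ := this
        have := h.d1 hr'
        have := y.hZ q'
        omega
    subst hq
    have hx1 : h.dep x = 1 := by omega
    have hABZ : R A B q := by
      rcases y.gen hg with rfl | rfl <;> rcases y.gen hx1 with rfl | rfl
      · have := h.L2 hr (by omega); omega
      · exact hr
      · exact h.sym hr
      · have := h.L2 hr (by omega); omega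
    rcases y.gen hg' with rfl | rfl <;> rcases y.gen (show h.dep g'' = 1 by omega) with rfl | rfl
    · exact y.ee4 (by omega) (by omega) (by omega) (by omega) dC c4 hABZ hrT
    · have := h.func hABZ hrT; subst this; omega
    · have := h.func hABZ (h.sym hrT); subst this; omega
    · exact y.symm.ee4 (by omega) (by omega) (by omega) (by omega) dC c4 (h.sym hABZ) hrT
  · obtain ⟨g5, t4, hg5, ht4, hr5⟩ := h.d2 (q := Z) (by omega)
    obtain ⟨g4, x3, hg4, hx3, hr4⟩ := h.d2 (q := t4) (by omega)
    have hx3' := lev3 x3 (by omega)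
    subst hx3'
    have pt4 := par t4
    have nt4 : n t4 = 1 := by
      rcases y.all t4 with rfl | rfl | rfl | rfl | h1 <;> omega
    have s6 := y.s6 nT nt4 (h.neD (by omega))
    have pT' := par T'
    have nT' : n T' = 1 := by
      rcases y.all T' with rfl | rfl | rfl | rfl | h1 <;> omega
    obtain ⟨a, b, ha, hb, hrT'⟩ := h.d2 (q := T') (by omega)
    have gA : ∀ {g}, (g = A ∨ g = B) → n g = 2 ∧ h.dep g = 1 := by
      rintro g (rfl | rfl) <;> omega
    refine h.fg A B x3 Z y.all (by omega) (by omega) (by omega) (by omega) y.CZ y.cZ ?_ ?_ 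
      ⟨g3, a, b, T', y.gen hg3, y.gen ha, y.gen (by omega), nT', hrT', h.sym hrC⟩ 
      ⟨g4, g5, t4, y.gen hg4, y.gen hg5, nt4, h.sym hr4, h.sym hr5⟩
    · intro t g q ht hg hr
      have := h.T1 hr ht
      have := (gA hg).1
      rcases y.out hr with rfl | rfl | hq
      · simp
      · simp
      · omega
    · intro g t g' q hg hg' h1 h2
      have := h.d1 h1
      have := h.d1 h2
      have := gA hg
      have := gA hg'
      have := par q
      have := y.hZ q
      rcases y.out h2 with rfl | rfl | hq
      · omega
      · rfl
      · omega

end Y4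
end SympAux


namespace SympAux
open Classical
namespace Y4
variable {ι : Type*} [Fintype ι] {n : ι → ℕ} {R : ι → ι → ι → Prop} {h : Sys2 n R} {A B C Z : ι}

/-- origin of a non-generator -/
theorem org (y : Y4 h A B C Z) {q} (hq : 2 ≤ h.dep q) :
    ∃ x, (R A x q ∨ R B x q) ∧ h.dep x + 1 = h.dep q := by
  obtain ⟨g, x, hg, hx, hr⟩ := h.d2 hq
  rcases y.gen hg with rfl | rfl
  · exact ⟨x, Or.inl hr, hx⟩
  · exact ⟨x, Or.inr hr, hx⟩

theorem tdep (h : Sys2 n R) {t} (ht : n t = 1) : 2 ≤ h.dep t := by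
  have := h.dep_pos t
  by_contra hc
  have := h.gen2 (i := t) (by omega)
  omega

/-- A, C, Z even, B odd -/
theorem eo1 (y : Y4 h A B C Z) (hA : n A % 2 = 0) (hB : n B % 2 = 1) (hC : n C % 2 = 0)
    (hZ : n Z % 2 = 0) : False := by
  have nA := y.nA
  have nB := y.nB
  have nC := y.nC
  have nZ := y.nZ
  have hT : ∃ T, n T = 1 := by
    obtain ⟨g, x, q, hg, hr, h1, h2⟩ := h.pw hA
    have := h.par hr
    rcases y.out hr with rfl | rfl | hq
    · omega
    · omega
    · exact ⟨q, hq⟩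
  obtain ⟨T, nT⟩ := hT
  have s5 := y.s5 nT
  have nA : n A = 2 := by omega
  have nB : n B = 3 := by omega
  have nC : n C = 2 := by omega
  have nZ : n Z = 2 := by omega
  have hBB : ∀ q, ¬ R B B q := by
    intro q hr
    have := h.L3 hr nB
    rcases y.out hr with rfl | rfl | hq <;> omega
  have hBT : ∀ t q, n t = 1 → ¬ R B t q := by
    intro t q ht hr
    have := h.T1 (h.sym hr) ht
    rcases y.out hr with rfl | rfl | hq <;> omega
  have cZ' := y.cZ'
  have cZ := y.cZ
  have hAT : ∀ t q, n t = 1 → R A t q → q = C ∨ q = Z := by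
    intro t q ht hr
    have := h.T1 (h.sym hr) ht
    rcases y.out hr with rfl | rfl | hq
    · simp
    · simp
    · omega
  have hAB : ∀ q, R A B q → q = C ∨ q = Z := by
    intro q hr
    have := h.par hr
    rcases y.out hr with rfl | rfl | hq
    · simp
    · simp
    · omega
  have hAC : ∀ q, R A C q → n q = 1 := by
    intro q hr
    have := h.par hr
    rcases y.out hr with rfl | rfl | hq <;> omega
  have hAA : ∀ q, R A A q → n q = 1 := fun q hr => h.L2 hr nA
  have dZ3 := y.Z3
  have dC := y.dC
  by_cases opt : R A B C
  · have hBC : ∀ q, ¬ R B C q := by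
      intro q hr
      have := h.par hr
      have : n q = 2 := by rcases y.out hr with rfl | rfl | hq <;> omega
      obtain ⟨q, hq⟩ := h.gam nB nA nC this (h.sym opt) hr
      exact hBB _ hq
    have hTC : ∀ t q, n t = 1 → ¬ R t C q := by
      intro t q ht hr
      rcases h.jac opt hr with ⟨p, p1, p2⟩ | ⟨p, p1, p2⟩
      · rcases hAT t p ht (h.sym p1) with rfl | rfl
        · exact hBC _ (h.sym p2)
        · exact cZ _ _ p2
      · exact hBT t p ht (h.sym p1)
    have hAC' : ∀ q, ¬ R A C q := by
      intro q hr
      have nq := hAC q hr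
      obtain ⟨g, z, hg, hr'⟩ := h.cen' nq
      rcases y.gen hg with rfl | rfl
      · obtain ⟨p, p1, p2⟩ := h.al hr nq y.AC (by omega) hr'
        exact hTC p _ (hAA p p1) p2
      · exact hBT _ _ nq hr'
    have trow : ∀ t, n t = 1 → R A A t := by
      intro t nt
      obtain ⟨x, hr, hx⟩ := y.org (tdep h nt)
      rcases hr with hr | hr <;> rcases y.all x with rfl | rfl | rfl | rfl | nx
      · exact hr
      · rcases hAB _ hr with rfl | rfl <;> omega
      · exact absurd hr (hAC' _)
      · exact absurd hr (cZ' _ _)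
      · rcases hAT _ _ nx hr with rfl | rfl <;> omega
      · rcases hAB _ (h.sym hr) with rfl | rfl <;> omega
      · exact absurd hr (hBB _)
      · exact absurd hr (hBC _)
      · exact absurd hr (cZ' _ _)
      · exact absurd hr (hBT _ _ nx)
    have hATZ : ∀ t, n t = 1 → R A t Z := by
      intro t nt
      obtain ⟨x, hr, hx⟩ := y.org (q := Z) (by omega)
      rcases hr with hr | hr <;> rcases y.all x with rfl | rfl | rfl | rfl | nx
      · have := hAA _ hr; omega
      · exact absurd (h.func opt hr) y.CZ
      · exact absurd hr (hAC' _)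
      · exact absurd hr (cZ' _ _)
      · rwa [h.func (trow t nt) (trow x nx)]
      · exact absurd (h.func opt (h.sym hr)) y.CZ
      · exact absurd hr (hBB _)
      · exact absurd hr (hBC _)
      · exact absurd hr (cZ' _ _)
      · exact absurd hr (hBT _ _ nx)
    refine y.wts 1 0 1 3 2 one_ne_zero ?_
    intro w wA wB wC wZ wt g x q hg hr
    rcases hg with rfl | rfl <;> rcases y.all x with rfl | rfl | rfl | rfl | nx
    · rw [wA, wt _ (hAA _ hr)]; rfl
    · rw [← h.func opt hr, wA, wB, wC]; rfl
    · exact absurd hr (hAC' _)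
    · exact absurd hr (cZ' _ _)
    · rw [← h.func (hATZ x nx) hr, wA, wt _ nx, wZ]; rfl
    · rw [← h.func opt (h.sym hr), wA, wB, wC]; rfl
    · exact absurd hr (hBB _)
    · exact absurd hr (hBC _)
    · exact absurd hr (cZ' _ _)
    · exact absurd hr (hBT _ _ nx)
  · have hABZ : ∀ q, R A B q → q = Z := by
      intro q hr
      rcases hAB q hr with rfl | rfl
      · exact absurd hr opt
      · rfl
    obtain ⟨t, nt, hAtC⟩ : ∃ t, n t = 1 ∧ R A t C := by
      obtain ⟨x, hr, hx⟩ := y.org (q := C) (by omega)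
      rcases hr with hr | hr <;> rcases y.all x with rfl | rfl | rfl | rfl | nx
      · have := hAA _ hr; omega
      · exact absurd hr opt
      · omega
      · exact absurd hr (cZ' _ _)
      · exact ⟨x, nx, hr⟩
      · exact absurd (h.sym hr) opt
      · exact absurd hr (hBB _)
      · omega
      · exact absurd hr (cZ' _ _)
      · exact absurd hr (hBT _ _ nx)
    have hAAt : R A A t := by
      obtain ⟨x, hr, hx⟩ := y.org (tdep h nt)
      have e : ∀ {i j q}, R i j q → n q = 1 → n i = n j := fun h1 h2 => h.T2 h1 h2
      have := h.d1 hAtC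
      rcases hr with hr | hr <;> rcases y.all x with rfl | rfl | rfl | rfl | nx
      · exact hr
      · have := e hr nt; omega
      · omega
      · exact absurd hr (cZ' _ _)
      · have := e hr nt; omega
      · have := e hr nt; omega
      · exact absurd hr (hBB _)
      · omega
      · exact absurd hr (cZ' _ _)
      · exact absurd hr (hBT _ _ nx)
    have hBC : ∀ q, ¬ R B C q := by
      intro q hr
      rcases h.jac hAtC hr with ⟨p, p1, p2⟩ | ⟨p, p1, p2⟩
      · rw [hABZ _ (h.sym p1)] at p2
        exact cZ _ _ p2
      · exact hBT _ _ nt p1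
    have hAC' : ∀ q, ¬ R A C q := fun q hr => h.del nA hAAt nt hAtC hr (hAC q hr)
    have trow : ∀ t, n t = 1 → R A A t := by
      intro t nt
      obtain ⟨x, hr, hx⟩ := y.org (tdep h nt)
      rcases hr with hr | hr <;> rcases y.all x with rfl | rfl | rfl | rfl | nx
      · exact hr
      · rcases hAB _ hr with rfl | rfl <;> omega
      · exact absurd hr (hAC' _)
      · exact absurd hr (cZ' _ _)
      · rcases hAT _ _ nx hr with rfl | rfl <;> omega
      · rcases hAB _ (h.sym hr) with rfl | rfl <;> omega
      · exact absurd hr (hBB _)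
      · exact absurd hr (hBC _)
      · exact absurd hr (cZ' _ _)
      · exact absurd hr (hBT _ _ nx)
    refine y.wts 1 0 3 1 2 one_ne_zero ?_
    intro w wA wB wC wZ wt g x q hg hr
    rcases hg with rfl | rfl <;> rcases y.all x with rfl | rfl | rfl | rfl | nx
    · rw [wA, wt _ (hAA _ hr)]; rfl
    · rw [hABZ _ hr, wA, wB, wZ]; rfl
    · exact absurd hr (hAC' _)
    · exact absurd hr (cZ' _ _)
    · rw [h.func (trow x nx) hAAt] at hr
      rw [← h.func hAtC hr, wA, wt _ nx, wC]; rfl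
    · rw [hABZ _ (h.sym hr), wA, wB, wZ]; rfl
    · exact absurd hr (hBB _)
    · exact absurd hr (hBC _)
    · exact absurd hr (cZ' _ _)
    · exact absurd hr (hBT _ _ nx)

/-- A, C even, B, Z odd -/
theorem eo2 (y : Y4 h A B C Z) (hA : n A % 2 = 0) (hB : n B % 2 = 1) (hC : n C % 2 = 0)
    (hZ : n Z % 2 = 1) : False := by
  have nA := y.nA
  have nB := y.nB
  have nC := y.nC
  have nZ := y.nZ
  have s4 := y.s4
  have nA : n A = 2 := by omega
  have nB : n B = 3 := by omega
  have nC : n C = 2 := by omega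
  have nZ : n Z = 3 := by omega
  have cZ' := y.cZ'
  have cZ := y.cZ
  have hAB : ∀ q, R A B q → q = C := by
    intro q hr
    have := h.par hr
    rcases y.out hr with rfl | rfl | hq
    · rfl
    all_goals omega
  have hAT : ∀ t q, n t = 1 → R A t q → q = C := by
    intro t q ht hr
    have := h.T1 (h.sym hr) ht
    rcases y.out hr with rfl | rfl | hq
    · rfl
    all_goals omega
  have hBT : ∀ t q, n t = 1 → R B t q → q = Z := by
    intro t q ht hr
    have := h.T1 (h.sym hr) ht
    rcases y.out hr with rfl | rfl | hq
    · omega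
    · rfl
    · omega
  have hBC : ∀ q, ¬ R B C q := by
    intro q hr
    have := h.par hr
    rcases y.out hr with rfl | rfl | hq
    · exact (ndep h hr).2 rfl
    · omega
    · omega
  refine y.wts 1 2 3 4 2 one_ne_zero ?_
  intro w wA wB wC wZ wt g x q hg hr
  rcases hg with rfl | rfl <;> rcases y.all x with rfl | rfl | rfl | rfl | nx
  · rw [wA, wt _ (h.L2 hr nA)]; rfl
  · rw [hAB _ hr, wA, wB, wC]; rfl
  · rcases y.out hr with rfl | rfl | nq
    · exact absurd rfl (ndep h hr).2
    · rw [wA, wC, wZ]; rfl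
    · exfalso
      obtain ⟨g', q', hg, hr'⟩ := h.cen' nq
      rcases y.gen hg with rfl | rfl
      · have := hAT _ _ nq hr'
        subst this
        have := h.d1 hr
        have := h.d1 hr'
        omega
      · rcases h.jac hr hr' with ⟨p, p1, p2⟩ | ⟨p, p1, p2⟩
        · rw [hAB _ (h.sym p1)] at p2
          have h1 := hBT _ _ nq hr'
          have h2 := h.L2 p2 nC
          subst h1
          omega
        · exact hBC _ p1
  · exact absurd hr (cZ' _ _)
  · rw [hAT _ _ nx hr, wA, wt _ nx, wC]; rfl
  · rw [hAB _ (h.sym hr), wA, wB, wC]; rfl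
  · have := h.L3 hr nB
    rcases y.out hr with rfl | rfl | hq
    · omega
    · rw [wB, wZ]; rfl
    · omega
  · exact absurd hr (hBC _)
  · exact absurd hr (cZ' _ _)
  · rw [hBT _ _ nx hr, wB, wt _ nx, wZ]; rfl

/-- A, Z even, B, C odd -/
theorem eo3 (y : Y4 h A B C Z) (hA : n A % 2 = 0) (hB : n B % 2 = 1) (hC : n C % 2 = 1)
    (hZ : n Z % 2 = 0) : False := by
  have nA := y.nA
  have nB := y.nB
  have nC := y.nC
  have nZ := y.nZ
  have s4 := y.s4
  have nA : n A = 2 := by omega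
  have nB : n B = 3 := by omega
  have nC : n C = 3 := by omega
  have nZ : n Z = 2 := by omega
  have cZ' := y.cZ'
  have cZ := y.cZ
  have hAB : ∀ q, R A B q → q = Z := by
    intro q hr
    have := h.par hr
    rcases y.out hr with rfl | rfl | hq
    · omega
    · rfl
    · omega
  have hAT : ∀ t q, n t = 1 → R A t q → q = Z := by
    intro t q ht hr
    have := h.T1 (h.sym hr) ht
    rcases y.out hr with rfl | rfl | hq
    · omega
    · rfl
    · omega
  have hBT : ∀ t q, n t = 1 → R B t q → q = C := by
    intro t q ht hr
    have := h.T1 (h.sym hr) ht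
    rcases y.out hr with rfl | rfl | hq
    · rfl
    all_goals omega
  have hBB : ∀ q, R B B q → q = C := by
    intro q hr
    have := h.L3 hr nB
    rcases y.out hr with rfl | rfl | hq
    · rfl
    all_goals omega
  have dC := y.dC
  obtain ⟨t, hAAt⟩ : ∃ t, R A A t := by
    obtain ⟨g, x, q, hg, hr, h1, h2⟩ := h.pw hA
    rcases y.gen hg with rfl | rfl
    · rcases y.all x with rfl | rfl | rfl | rfl | hx
      · exact ⟨_, hr⟩
      · omega
      · omega
      · exact absurd hr (cZ' _ _)
      · omega
    · omega
  have nt := h.L2 hAAt nA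
  have hACA : ∀ q, R A C q → q = Z := by
    intro q hr
    have := h.par hr
    rcases y.out hr with rfl | rfl | hq
    · omega
    · rfl
    · omega
  have hAC : ∀ q, ¬ R A C q := by
    intro q hr
    obtain ⟨x, hrx, hx⟩ := y.org (q := C) (by omega)
    rcases hrx with hrx | hrx <;> rcases y.all x with rfl | rfl | rfl | rfl | nx
    · have := h.L2 hrx nA; omega
    · have := hAB _ hrx; subst this; omega
    · omega
    · exact absurd hrx (cZ' _ _)
    · have := hAT _ _ nx hrx; subst this; omega
    · have := hAB _ (h.sym hrx); subst this; omega
    · rcases h.jac hrx hr with ⟨p, p1, p2⟩ | ⟨p, p1, p2⟩ <;>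
      · rw [hAB _ p1] at p2
        exact cZ _ _ p2
    · omega
    · exact absurd hrx (cZ' _ _)
    · rcases h.jac hrx hr with ⟨p, p1, p2⟩ | ⟨p, p1, p2⟩
      · rw [hAB _ p1] at p2
        exact cZ _ _ p2
      · rw [hAT _ _ nx p1] at p2
        exact cZ _ _ p2
  have hBC : ∀ q, ¬ R B C q := by
    intro q hr
    have := h.par hr
    have nq : n q = 1 := by
      rcases y.out hr with rfl | rfl | hq
      · exact absurd rfl (ndep h hr).2
      · omega
      · exact hq
    obtain ⟨g', q', hg, hr'⟩ := h.cen' nq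
    rcases y.gen hg with rfl | rfl
    · rcases h.jac hr hr' with ⟨p, p1, p2⟩ | ⟨p, p1, p2⟩
      · rw [hAB _ p1] at p2
        exact cZ _ _ p2
      · exact hAC _ p1
    · have := hBT _ _ nq hr'
      subst this
      have := h.d1 hr
      have := h.d1 hr'
      have := h.dep_pos g'
      omega
  refine y.wts 1 2 4 3 2 one_ne_zero ?_
  intro w wA wB wC wZ wt g x q hg hr
  rcases hg with rfl | rfl <;> rcases y.all x with rfl | rfl | rfl | rfl | nx
  · rw [wA, wt _ (h.L2 hr nA)]; rfl
  · rw [hAB _ hr, wA, wB, wZ]; rfl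
  · exact absurd hr (hAC _)
  · exact absurd hr (cZ' _ _)
  · rw [hAT _ _ nx hr, wA, wt _ nx, wZ]; rfl
  · rw [hAB _ (h.sym hr), wA, wB, wZ]; rfl
  · rw [hBB _ hr, wB, wC]; rfl
  · exact absurd hr (hBC _)
  · exact absurd hr (cZ' _ _)
  · rw [hBT _ _ nx hr, wB, wt _ nx, wC]; rfl

theorem eo (y : Y4 h A B C Z) (hA : n A % 2 = 0) (hB : n B % 2 = 1) : False := by
  rcases Nat.mod_two_eq_zero_or_one (n C) with hC | hC <;>
    rcases Nat.mod_two_eq_zero_or_one (n Z) with hZ | hZ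
  · exact y.eo1 hA hB hC hZ
  · exact y.eo2 hA hB hC hZ
  · exact y.eo3 hA hB hC hZ
  · have nA := y.nA
    have nB := y.nB
    have nC := y.nC
    have nZ := y.nZ
    have s4 := y.s4
    have not1 : ∀ t, n t ≠ 1 := by
      intro t ht
      have := y.s5 ht
      omega
    obtain ⟨g, x, q, hg, hr, h1, h2⟩ := h.pw hA
    rcases y.gen hg with rfl | rfl
    · rcases y.all x with rfl | rfl | rfl | rfl | hx
      · exact not1 _ (h.L2 hr (by omega))
      all_goals omega
    · omega

theorem false (y : Y4 h A B C Z) : False := by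
  rcases Nat.mod_two_eq_zero_or_one (n A) with hC | hC <;>
    rcases Nat.mod_two_eq_zero_or_one (n B) with hZ | hZ
  · exact y.ee hC hZ
  · exact y.eo hC hZ
  · exact y.symm.eo hZ hC
  · exact y.oo hC hZ

end Y4

theorem Sys2.false {ι : Type*} [Fintype ι] {n : ι → ℕ} {R : ι → ι → ι → Prop} (h : Sys2 n R) :
    False := by
  obtain ⟨Z, hZ, nZ, cZ, Z3⟩ := h.top
  obtain ⟨A, B, hAB, hA, hB⟩ := h.twogen
  by_cases hX : ∀ i, 2 ≤ n i → h.dep i = 1 ∨ h.dep i = h.dep Z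
  · exact h.caseX hZ Z3 hX
  push Not at hX
  obtain ⟨C, nC, dC, dC'⟩ := hX
  have := h.dep_pos C
  have := hZ C
  have nA := h.gen2 hA
  have nB := h.gen2 hB
  have AC : A ≠ C := h.neD (by omega)
  have AZ : A ≠ Z := h.neD (by omega)
  have BC : B ≠ C := h.neD (by omega)
  have BZ : B ≠ Z := h.neD (by omega)
  have CZ : C ≠ Z := h.neD (by omega)
  by_cases hall : ∀ i, i = A ∨ i = B ∨ i = C ∨ i = Z ∨ n i = 1
  · exact Y4.false (h := h) (A := A) (B := B) (C := C) (Z := Z)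
      ⟨hAB, hA, hB, by omega, by omega, hZ, nC, nZ, cZ, Z3, hall⟩
  · push Not at hall
    obtain ⟨E, EA, EB, EC, EZ, nE⟩ := hall
    have := h.npos E
    refine h.caseY5 {E, A, B, C, Z} ?_ ?_
    · intro i hi
      simp only [Finset.mem_insert, Finset.mem_singleton] at hi
      rcases hi with rfl | rfl | rfl | rfl | rfl <;> omega
    · rw [Finset.card_insert_of_notMem (by simp [*]), Finset.card_insert_of_notMem (by simp [*]),
        Finset.card_insert_of_notMem (by simp [*]), Finset.card_insert_of_notMem (by simp [*]),
        Finset.card_singleton]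

end SympAux


namespace SympAux
open LieModule

variable {g : Type*} [LieRing g] [LieAlgebra ℂ g] [FiniteDimensional ℂ g]

theorem perfect_span (hp : Symp.IsPerfectLie g) :
    Submodule.span ℂ {z : g | ∃ x y : g, ⁅x, y⁆ = z} = ⊤ := by
  have h := congrArg LieSubmodule.toSubmodule hp
  rw [LieSubmodule.lieIdeal_oper_eq_linear_span'] at h
  simpa using h

theorem exists_inv (hp : Symp.IsPerfectLie g) (h : LieIdeal ℂ g) [LieAlgebra.IsSolvable h]
    (M : Type*) [AddCommGroup M] [Module ℂ M] [LieRingModule g M] [LieModule ℂ g M]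
    [FiniteDimensional ℂ M] [Nontrivial M] : ∃ m : M, m ≠ 0 ∧ ∀ x ∈ h, ⁅x, m⁆ = 0 := by
  obtain ⟨χ, hχ⟩ := LieModule.exists_nontrivial_weightSpace_of_isSolvable ℂ h M
  let W : LieSubmodule ℂ g M := weightSpaceOfIsLieTower ℂ M χ
  have hW : Nontrivial W := inferInstanceAs (Nontrivial (weightSpace M χ))
  have hx : ∀ x : h, ∀ w : W, ⁅(x : g), w⁆ = χ x • w := by
    intro x w
    have := w.2
    have h2 : (w : M) ∈ weightSpace M χ := this
    rw [mem_weightSpace] at h2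
    apply Subtype.ext
    exact h2 x
  have htr : ∀ x : g, LinearMap.trace ℂ W (toEnd ℂ g W x) = 0 := by
    have hle : Submodule.span ℂ {z : g | ∃ x y : g, ⁅x, y⁆ = z} ≤
        LinearMap.ker (LinearMap.trace ℂ W ∘ₗ (toEnd ℂ g W : g →ₗ[ℂ] _)) := by
      rw [Submodule.span_le]
      rintro _ ⟨x, y, rfl⟩
      simp [LinearMap.mem_ker]
    intro x
    have := hle (by rw [perfect_span hp]; trivial : x ∈ _)
    simpa using this
  have hzero : ∀ x : h, χ x = 0 := by
    intro x
    have h1 := htr x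
    have h2 : toEnd ℂ g W x = χ x • LinearMap.id := by
      ext w
      simp [hx x w]
    rw [h2] at h1
    simp only [map_smul, LinearMap.trace_id, smul_eq_mul, mul_eq_zero, Nat.cast_eq_zero] at h1
    rcases h1 with h1 | h1
    · exact h1
    · exact absurd h1 Module.finrank_pos.ne'
  obtain ⟨w, hw⟩ := exists_ne (0 : W)
  refine ⟨w, by simpa using hw, fun x hxh => ?_⟩
  have := congrArg Subtype.val (hx ⟨x, hxh⟩ w)
  rw [hzero, zero_smul] at this
  simpa using this

/-- upper central series relative to an ideal -/
def Uc (h : LieIdeal ℂ g) : ℕ → LieIdeal ℂ g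
  | 0 => ⊥
  | m + 1 =>
    { carrier := {x | ∀ y ∈ h, ⁅y, x⁆ ∈ Uc h m}
      add_mem' := fun {a b} ha hb y hy => by rw [lie_add]; exact add_mem (ha y hy) (hb y hy)
      zero_mem' := fun y _ => by rw [lie_zero]; exact zero_mem _
      smul_mem' := fun c x hx y hy => by rw [lie_smul]; exact SMulMemClass.smul_mem c (hx y hy)
      lie_mem := fun {z x} hx y hy => by
        rw [leibniz_lie]
        refine add_mem (hx _ (lie_mem_left ℂ g h y z hy)) ?_
        exact lie_mem_right ℂ g (Uc h m) z _ (hx y hy) }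

theorem mem_Uc_succ (h : LieIdeal ℂ g) (m : ℕ) (x : g) :
    x ∈ Uc h (m + 1) ↔ ∀ y ∈ h, ⁅y, x⁆ ∈ Uc h m := Iff.rfl

theorem Uc_top (hp : Symp.IsPerfectLie g) (h : LieIdeal ℂ g) [LieAlgebra.IsSolvable h] :
    ∃ N, Uc h N = ⊤ := by
  have mono : Monotone (Uc h) := monotone_nat_of_le_succ fun m x hx => by
    rw [mem_Uc_succ]
    exact fun y _ => lie_mem_right ℂ g _ y x hx
  obtain ⟨N, hN⟩ := WellFoundedGT.monotone_chain_condition ⟨Uc h, mono⟩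
  refine ⟨N, ?_⟩
  have hN1 : Uc h N = Uc h (N + 1) := hN (N + 1) (Nat.le_succ N)
  by_contra hne
  have : Nontrivial (g ⧸ Uc h N) := by
    have : (Uc h N).toSubmodule ≠ ⊤ := by simpa using hne
    exact Submodule.Quotient.nontrivial_iff.2 this
  obtain ⟨m, hm, hm0⟩ := exists_inv hp h (g ⧸ Uc h N)
  obtain ⟨x, rfl⟩ := LieSubmodule.Quotient.surjective_mk' _ m
  apply hm
  rw [LieSubmodule.Quotient.mk_eq_zero, hN1, mem_Uc_succ]
  intro y hy
  have := hm0 y hy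
  rw [← LieModuleHom.map_lie, LieSubmodule.Quotient.mk_eq_zero] at this
  exact this

end SympAux


namespace SympAux

variable {g : Type*} [LieRing g] [LieAlgebra ℂ g] [FiniteDimensional ℂ g]

/-- All hypotheses of the theorem. -/
structure Ctx (s : LieSubalgebra ℂ g) {k : ℕ} (V : Fin k → Submodule ℂ g) : Prop where
  symp : Symp.IsSympathetic g
  nss : LieAlgebra.radical ℂ g ≠ ⊥
  levi : Symp.IsSimpleLevi g s
  dec : Symp.IsDecomp g s V
  conv : Symp.Convention g V

/-- The bracket table. -/
def Rel {k : ℕ} (V : Fin k → Submodule ℂ g) (i j q : Fin k) : Prop :=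
  Symp.lieSpan2 g (V i) (V j) = V q

namespace Ctx
variable {s : LieSubalgebra ℂ g} {k : ℕ} {V : Fin k → Submodule ℂ g}

theorem nb (c : Ctx s V) (i) : V i ≠ ⊥ := (c.dec.1 i).1
theorem inv (c : Ctx s V) {i} {x v : g} (hx : x ∈ s) (hv : v ∈ V i) : ⁅x, v⁆ ∈ V i :=
  (c.dec.1 i).2.1 x hx v hv
theorem irr (c : Ctx s V) {i} (W : Submodule ℂ g) (hW : W ≤ V i) (hi : ∀ x ∈ s, ∀ w ∈ W, ⁅x, w⁆ ∈ W) :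
    W = ⊥ ∨ W = V i := (c.dec.1 i).2.2 W hW hi

theorem ex (c : Ctx s V) (i) : ∃ v ∈ V i, v ≠ 0 := (Submodule.ne_bot_iff _).1 (c.nb i)

theorem mem_span2 {A B : Submodule ℂ g} {x y : g} (hx : x ∈ A) (hy : y ∈ B) :
    ⁅x, y⁆ ∈ Symp.lieSpan2 g A B := Submodule.subset_span ⟨x, hx, y, hy, rfl⟩

theorem span2_le {A B C : Submodule ℂ g} (h : ∀ x ∈ A, ∀ y ∈ B, ⁅x, y⁆ ∈ C) :
    Symp.lieSpan2 g A B ≤ C := by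
  rw [Symp.lieSpan2, Submodule.span_le]
  rintro _ ⟨x, hx, y, hy, rfl⟩
  exact h x hx y hy

theorem span2_comm (A B : Submodule ℂ g) : Symp.lieSpan2 g A B = Symp.lieSpan2 g B A := by
  apply le_antisymm <;>
  · apply span2_le
    intro x hx y hy
    rw [← lie_skew]
    exact neg_mem (mem_span2 hy hx)

theorem _root_.SympAux.Rel.mem {i j q : Fin k} (h : Rel V i j q) {x y : g} (hx : x ∈ V i)
    (hy : y ∈ V j) : ⁅x, y⁆ ∈ V q := by
  rw [← h]; exact mem_span2 hx hy

theorem _root_.SympAux.Rel.le {i j q : Fin k} (h : Rel V i j q) {C : Submodule ℂ g} 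
    (hC : ∀ x ∈ V i, ∀ y ∈ V j, ⁅x, y⁆ ∈ C) : V q ≤ C := by
  rw [← h]; exact span2_le hC

theorem _root_.SympAux.Rel.sym {i j q : Fin k} (h : Rel V i j q) : Rel V j i q := by
  rw [Rel, span2_comm]; exact h

theorem nz (c : Ctx s V) {i j} {x y : g} (hx : x ∈ V i) (hy : y ∈ V j) (hne : ⁅x, y⁆ ≠ 0) :
    ∃ q, Rel V i j q ∧ ⁅x, y⁆ ∈ V q := by
  have h1 : Symp.lieSpan2 g (V i) (V j) ≠ ⊥ := by
    rw [Submodule.ne_bot_iff]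
    exact ⟨_, mem_span2 hx hy, hne⟩
  obtain ⟨q, hq, -⟩ := c.conv i j h1
  exact ⟨q, hq, Rel.mem hq hx hy⟩

theorem inj (c : Ctx s V) : Function.Injective V := c.dec.2.1.injective c.nb

theorem func (c : Ctx s V) {i j q q'} (h : Rel V i j q) (h' : Rel V i j q') : q = q' :=
  c.inj (h.symm.trans h')

theorem disj (c : Ctx s V) {q q'} {x : g} (hx : x ∈ V q) (hx' : x ∈ V q') (h0 : x ≠ 0) : q = q' := by
  by_contra hne
  have := c.dec.2.1.pairwiseDisjoint hne
  exact h0 (Submodule.disjoint_def.1 this x hx hx')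

/-- nonvanishing of a bracket identifies the target -/
theorem nz' (c : Ctx s V) {i j q} {x y : g} (hx : x ∈ V i) (hy : y ∈ V j) (hne : ⁅x, y⁆ ≠ 0)
    (hq : ⁅x, y⁆ ∈ V q) : Rel V i j q := by
  obtain ⟨q', h1, h2⟩ := c.nz hx hy hne
  rwa [c.disj hq h2 hne]

theorem sup_eq (c : Ctx s V) : s.toSubmodule ⊔ ⨆ i, V i = ⊤ := by
  rw [c.dec.2.2]; exact c.levi.2.sup_eq_top

theorem isCompl (c : Ctx s V) (i : Fin k) :
    IsCompl (V i) ((⨆ (j) (_ : j ≠ i), V j) ⊔ s.toSubmodule) := by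
  have e : V i ⊔ (⨆ (j) (_ : j ≠ i), V j) = ⨆ j, V j := by
    rw [← iSup_split_single]
  constructor
  · apply Disjoint.disjoint_sup_right_of_disjoint_sup_left
    · exact c.dec.2.1 i
    · rw [e, c.dec.2.2]
      exact c.levi.2.disjoint.symm
  · rw [codisjoint_iff, ← sup_assoc, e, sup_comm]
    exact c.sup_eq

/-- projection to `V i` -/
noncomputable def P (c : Ctx s V) (i : Fin k) : g →ₗ[ℂ] g := (V i).projection _ (c.isCompl i)

theorem P_self (c : Ctx s V) {i} {x : g} (hx : x ∈ V i) : c.P i x = x :=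
  Submodule.projection_apply_of_mem_left (c.isCompl i) hx

theorem P_mem (c : Ctx s V) (i) (x : g) : c.P i x ∈ V i :=
  Submodule.projection_apply_mem (c.isCompl i) x

theorem P_ne (c : Ctx s V) {i j} (hij : j ≠ i) {x : g} (hx : x ∈ V j) : c.P i x = 0 :=
  (Submodule.projection_apply_eq_zero_iff (c.isCompl i)).2
    (Submodule.mem_sup_left (Submodule.mem_iSup_of_mem j (Submodule.mem_iSup_of_mem hij hx)))

theorem P_s (c : Ctx s V) {i} {x : g} (hx : x ∈ s) : c.P i x = 0 :=
  (Submodule.projection_apply_eq_zero_iff (c.isCompl i)).2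
    (Submodule.mem_sup_right hx)

theorem ind (c : Ctx s V) {p : g → Prop} (hs : ∀ x ∈ s, p x) (hV : ∀ i, ∀ x ∈ V i, p x)
    (ha : ∀ x y, p x → p y → p (x + y)) (x : g) : p x := by
  have hx : x ∈ s.toSubmodule ⊔ ⨆ i, V i := by rw [c.sup_eq]; trivial
  obtain ⟨a, ha', b, hb, rfl⟩ := Submodule.mem_sup.1 hx
  refine ha _ _ (hs a ha') ?_
  exact Submodule.iSup_induction V (motive := p) hb hV (hs 0 (zero_mem _)) ha

theorem rad_mem (c : Ctx s V) {i} {x : g} (hx : x ∈ V i) : x ∈ LieAlgebra.radical ℂ g := by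
  have : x ∈ ⨆ i, V i := Submodule.mem_iSup_of_mem i hx
  rw [c.dec.2.2] at this
  exact this

theorem sdisj (c : Ctx s V) {x : g} (hx : x ∈ s) (hx' : x ∈ LieAlgebra.radical ℂ g) : x = 0 :=
  Submodule.disjoint_def.1 c.levi.2.disjoint x hx hx'

theorem sum_le (c : Ctx s V) :
    Module.finrank ℂ s + ∑ i, Module.finrank ℂ (V i) ≤ Module.finrank ℂ g := by
  let f : (s × (∀ i, V i)) →ₗ[ℂ] g :=
    LinearMap.coprod s.toSubmodule.subtype (LinearMap.lsum ℂ (fun i => V i) ℂ fun i => (V i).subtype)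
  have hf : ∀ a v, f (a, v) = (a : g) + ∑ i, (v i : g) := by
    intro a v
    simp [f, LinearMap.lsum_apply]
    rfl
  have hinj : Function.Injective f := by
    rw [← LinearMap.ker_eq_bot, LinearMap.ker_eq_bot']
    rintro ⟨a, v⟩ h0
    rw [hf] at h0
    have hv : ∀ i, v i = 0 := by
      intro i
      have := congrArg (c.P i) h0
      rw [map_add, map_sum, c.P_s a.2, Finset.sum_eq_single i, c.P_self (v i).2, map_zero,
        zero_add] at this
      · exact Subtype.ext this
      · intro j _ hj
        exact c.P_ne hj (v j).2
      · simp
    have : v = 0 := funext hv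
    subst this
    simp at h0
    simp [h0]
  have := LinearMap.finrank_le_finrank_of_injective hinj
  simpa [Module.finrank_prod, Module.finrank_pi_fintype] using this

theorem jac (c : Ctx s V) {i j l m r} (h1 : Rel V j l m) (h2 : Rel V i m r) :
    (∃ p, Rel V i j p ∧ Rel V p l r) ∨ (∃ p, Rel V i l p ∧ Rel V p j r) := by
  by_contra hc
  push Not at hc
  obtain ⟨hc1, hc2⟩ := hc
  -- the projection to `V r` of all the double brackets vanishes
  have key : ∀ x ∈ V i, ∀ y ∈ V j, ∀ z ∈ V l, ⁅x, ⁅y, z⁆⁆ = 0 := by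
    intro x hx y hy z hz
    have hm : ⁅x, ⁅y, z⁆⁆ ∈ V r := h2.mem hx (h1.mem hy hz)
    rw [← c.P_self hm, leibniz_lie, map_add]
    have e1 : c.P r ⁅⁅x, y⁆, z⁆ = 0 := by
      by_cases hxy : ⁅x, y⁆ = 0
      · simp [hxy]
      obtain ⟨p, hp, hp'⟩ := c.nz hx hy hxy
      by_cases h0 : ⁅⁅x, y⁆, z⁆ = 0
      · simp [h0]
      obtain ⟨q, hq, hq'⟩ := c.nz hp' hz h0
      apply c.P_ne (j := q) _ hq'
      rintro rfl
      exact hc1 p hp hq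
    have e2 : c.P r ⁅y, ⁅x, z⁆⁆ = 0 := by
      by_cases hxy : ⁅x, z⁆ = 0
      · simp [hxy]
      obtain ⟨p, hp, hp'⟩ := c.nz hx hz hxy
      by_cases h0 : ⁅y, ⁅x, z⁆⁆ = 0
      · simp [h0]
      obtain ⟨q, hq, hq'⟩ := c.nz hy hp' h0
      apply c.P_ne (j := q) _ hq'
      rintro rfl
      exact hc2 p hp hq.sym
    rw [e1, e2, add_zero]
  apply c.nb r
  rw [eq_bot_iff]
  apply h2.le
  intro x hx w hw
  have : V m ≤ LinearMap.ker (LieAlgebra.ad ℂ g x : g →ₗ[ℂ] g) := by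
    apply h1.le
    intro y hy z hz
    simpa using key x hx y hy z hz
  simpa using this hw

theorem uc (c : Ctx s V) : ∃ N, Uc (LieAlgebra.radical ℂ g) N = ⊤ := Uc_top c.symp.2.1 _

theorem nil (c : Ctx s V) : ∃ N, ∀ q, ¬ Dp (Rel V) N q := by
  obtain ⟨N, hN⟩ := c.uc
  have key : ∀ m l, (∀ j, V j ≤ (Uc (LieAlgebra.radical ℂ g) (l + m)).toSubmodule) →
      ∀ q, Dp (Rel V) m q → V q ≤ (Uc (LieAlgebra.radical ℂ g) l).toSubmodule := by
    intro m
    induction m with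
    | zero => intro l h q _; exact h q
    | succ m ih =>
      rintro l h q ⟨i, j, hj, hr⟩
      have := ih (l + 1) (fun j => by rw [show l + 1 + m = l + (m + 1) by ring]; exact h j) j hj
      apply hr.le
      intro x hx y hy
      exact (mem_Uc_succ _ _ _).1 (this hy) x (c.rad_mem hx)
  refine ⟨N, fun q hq => c.nb q ?_⟩
  have := key N 0 (fun j => by rw [zero_add, hN]; exact le_top) q hq
  exact eq_bot_iff.2 this

theorem s_perf (c : Ctx s V) : ⁅(⊤ : LieIdeal ℂ s), (⊤ : LieIdeal ℂ s)⁆ = ⊤ := by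
  have := c.levi.1
  rcases LieAlgebra.IsSimple.eq_bot_or_eq_top (R := ℂ) (⁅(⊤ : LieIdeal ℂ s), (⊤ : LieIdeal ℂ s)⁆) with h | h
  · exfalso
    apply LieAlgebra.IsSimple.non_abelian (R := ℂ) (L := s)
    refine ⟨fun x y => ?_⟩
    have : ⁅x, y⁆ ∈ ⁅(⊤ : LieIdeal ℂ s), (⊤ : LieIdeal ℂ s)⁆ :=
      LieSubmodule.lie_mem_lie (LieSubmodule.mem_top _) (LieSubmodule.mem_top _)
    rw [h] at this
    simpa using this
  · exact h

theorem s_span (c : Ctx s V) : Submodule.span ℂ {z : s | ∃ x y : s, ⁅x, y⁆ = z} = ⊤ := by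
  have h := congrArg LieSubmodule.toSubmodule c.s_perf
  rw [LieSubmodule.lieIdeal_oper_eq_linear_span'] at h
  simpa using h

/-- `s` acts trivially on one-dimensional modules -/
theorem triv (c : Ctx s V) {i} (hi : Module.finrank ℂ (V i) = 1) {x v : g} (hx : x ∈ s) (hv : v ∈ V i) :
    ⁅x, v⁆ = 0 := by
  have hsc : ∀ x ∈ s, ∀ v ∈ V i, ∃ a : ℂ, ∀ w ∈ V i, ⁅x, w⁆ = a • w := by
    intro x hx v hv
    obtain ⟨t, ht, ht0⟩ := c.ex i
    have hsp := (finrank_eq_one_iff_of_nonzero' (⟨t, ht⟩ : V i) (by simpa using ht0)).1 hi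
    obtain ⟨a, ha⟩ := hsp ⟨_, c.inv hx ht⟩
    refine ⟨a, fun w hw => ?_⟩
    obtain ⟨b, hb⟩ := hsp ⟨w, hw⟩
    have ha' : a • t = ⁅x, t⁆ := congrArg Subtype.val ha
    have hb' : b • t = w := congrArg Subtype.val hb
    rw [← hb', lie_smul, ← ha', smul_comm]
  have : (⊤ : Submodule ℂ s) ≤ LinearMap.ker
      (((LieAlgebra.ad ℂ g v : g →ₗ[ℂ] g)) ∘ₗ s.toSubmodule.subtype) := by
    rw [← c.s_span, Submodule.span_le]
    rintro _ ⟨x, y, rfl⟩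
    obtain ⟨a, ha⟩ := hsc x x.2 v hv
    obtain ⟨b, hb⟩ := hsc y y.2 v hv
    have : ⁅⁅(x : g), (y : g)⁆, v⁆ = 0 := by
      rw [lie_lie, ha _ (c.inv y.2 hv), hb v hv, hb _ (c.inv x.2 hv), ha v hv, smul_comm, sub_self]
    change ⁅v, ⁅(x : g), (y : g)⁆⁆ = 0
    rw [← lie_skew, this, neg_zero]
  have h2 : ⁅v, x⁆ = 0 := this (show (⟨x, hx⟩ : s) ∈ ⊤ by trivial)
  rw [← lie_skew, h2, neg_zero]

theorem perf (c : Ctx s V) (i) (hi : ∀ a b, ¬ Rel V a b i) : 2 ≤ Module.finrank ℂ (V i) := by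
  by_contra hlt
  have hpos : 0 < Module.finrank ℂ (V i) := Module.finrank_pos_iff.2
    ((Submodule.nontrivial_iff_ne_bot).2 (c.nb i))
  have h1 : Module.finrank ℂ (V i) = 1 := by omega
  have hs : ∀ x ∈ s, ∀ y, c.P i ⁅x, y⁆ = 0 := by
    intro x hx
    refine c.ind ?_ ?_ ?_
    · intro y hy; exact c.P_s (s.lie_mem hx hy)
    · intro j y hy
      by_cases hj : j = i
      · subst hj
        rw [c.triv h1 hx hy, map_zero]
      · exact c.P_ne hj (c.inv hx hy)
    · intro a b ha hb
      rw [lie_add, map_add, ha, hb, add_zero]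
  have key : ∀ x y : g, c.P i ⁅x, y⁆ = 0 := by
    refine c.ind hs ?_ ?_
    · intro j x hx
      refine c.ind ?_ ?_ ?_
      · intro y hy
        rw [← lie_skew, map_neg, hs y hy x, neg_zero]
      · intro l y hy
        by_cases h0 : ⁅x, y⁆ = 0
        · rw [h0, map_zero]
        obtain ⟨q, hq, hq'⟩ := c.nz hx hy h0
        apply c.P_ne (j := q) _ hq'
        rintro rfl
        exact hi _ _ hq
      · intro a b ha hb
        rw [lie_add, map_add, ha, hb, add_zero]
    · intro a b ha hb y
      rw [add_lie, map_add, ha, hb, add_zero]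
  have hle : (⊤ : Submodule ℂ g) ≤ LinearMap.ker (c.P i) := by
    rw [← perfect_span c.symp.2.1, Submodule.span_le]
    rintro _ ⟨x, y, rfl⟩
    exact key x y
  obtain ⟨v, hv, hv0⟩ := c.ex i
  apply hv0
  rw [← c.P_self hv]
  exact hle trivial

theorem cen (c : Ctx s V) (i) (hi : Module.finrank ℂ (V i) = 1) : ∃ j q, Rel V i j q := by
  by_contra hc
  push Not at hc
  obtain ⟨v, hv, hv0⟩ := c.ex i
  apply hv0
  have : v ∈ LieAlgebra.center ℂ g := by
    rw [LieModule.mem_maxTrivSubmodule]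
    refine c.ind ?_ ?_ ?_
    · intro x hx; exact c.triv hi hx hv
    · intro j x hx
      by_contra h0
      obtain ⟨q, hq, -⟩ := c.nz hx hv h0
      exact hc j q hq.sym
    · intro a b ha hb
      rw [add_lie, ha, hb, add_zero]
  rw [c.symp.1] at this
  simpa using this

theorem wt (c : Ctx s V) (w : Fin k → ℤ) (hw : ∀ i j q, Rel V i j q → w i + w j = w q) (i) : w i = 0 := by
  let T : g →ₗ[ℂ] g := ∑ i, (w i : ℂ) • c.P i
  have Ts : ∀ x ∈ s, T x = 0 := by
    intro x hx
    simp [T, LinearMap.sum_apply, c.P_s hx]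
  have TV : ∀ i, ∀ x ∈ V i, T x = (w i : ℂ) • x := by
    intro i x hx
    simp only [T, LinearMap.sum_apply, LinearMap.smul_apply]
    rw [Finset.sum_eq_single i, c.P_self hx]
    · intro j _ hj
      rw [c.P_ne hj.symm hx, smul_zero]
    · simp
  have leib : ∀ x y, T ⁅x, y⁆ = ⁅x, T y⁆ - ⁅y, T x⁆ := by
    have hs : ∀ x ∈ s, ∀ y, T ⁅x, y⁆ = ⁅x, T y⁆ - ⁅y, T x⁆ := by
      intro x hx
      refine c.ind ?_ ?_ ?_
      · intro y hy; rw [Ts _ (s.lie_mem hx hy), Ts x hx, Ts y hy]; simp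
      · intro j y hy
        rw [TV j _ (c.inv hx hy), Ts x hx, TV j y hy]; simp
      · intro a b ha hb
        rw [lie_add, map_add, ha, hb, map_add, lie_add, add_lie]; abel
    refine c.ind hs ?_ ?_
    · intro j x hx
      refine c.ind ?_ ?_ ?_
      · intro y hy
        rw [← lie_skew, map_neg, hs y hy x]; abel
      · intro l y hy
        rw [TV j x hx, TV l y hy, lie_smul, lie_smul, ← lie_skew x y, smul_neg]
        by_cases h0 : ⁅y, x⁆ = 0
        · simp [h0]
        obtain ⟨q, hq, hq'⟩ := c.nz hy hx h0
        rw [map_neg, TV q _ hq', ← hw _ _ _ hq]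
        push_cast
        rw [add_smul]
        abel
      · intro a b ha hb
        rw [lie_add, map_add, ha, hb, map_add, lie_add, add_lie]; abel
    · intro a b ha hb y
      rw [add_lie, map_add, ha, hb, map_add, lie_add, add_lie]; abel
  obtain ⟨x0, hx0⟩ := c.symp.2.2 { T with leibniz' := leib }
  replace hx0 : ∀ y, T y = ⁅x0, y⁆ := hx0
  -- the `s`-component of `x0` vanishes
  have hx0h : x0 ∈ LieAlgebra.radical ℂ g := by
    have h1 : x0 ∈ s.toSubmodule ⊔ (LieAlgebra.radical ℂ g).toSubmodule := by
      rw [c.levi.2.sup_eq_top]; trivial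
    obtain ⟨a, ha, b, hb, rfl⟩ := Submodule.mem_sup.1 h1
    have hcomm : ∀ y ∈ s, ⁅a, y⁆ = 0 := by
      intro y hy
      have := hx0 y
      rw [Ts y hy, add_lie] at this
      apply c.sdisj (s.lie_mem ha hy)
      rw [eq_neg_of_add_eq_zero_left this.symm]
      exact neg_mem (lie_mem_left ℂ g (LieAlgebra.radical ℂ g) b y hb)
    have hsim := c.levi.1
    have : (⟨a, ha⟩ : s) ∈ LieAlgebra.center ℂ s := by
      rw [LieModule.mem_maxTrivSubmodule]
      intro y
      apply Subtype.ext
      have := hcomm y y.2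
      rw [← lie_skew, neg_eq_zero] at this
      simpa using this
    rw [LieAlgebra.center_eq_bot] at this
    have ha0 : a = 0 := congrArg Subtype.val (by simpa using this : (⟨a, ha⟩ : s) = 0)
    rw [ha0, zero_add]
    exact hb
  obtain ⟨v, hv, hv0⟩ := c.ex i
  by_contra hwi
  have hwi' : (w i : ℂ) ≠ 0 := by exact_mod_cast hwi
  obtain ⟨N, hN⟩ := c.uc
  have : ∀ m, v ∈ Uc (LieAlgebra.radical ℂ g) m → v = 0 := by
    intro m
    induction m with
    | zero => intro h; simpa [Uc] using h
    | succ m ih =>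
      intro h
      apply ih
      have h2 := (mem_Uc_succ _ _ _).1 h x0 hx0h
      rw [← hx0, TV i v hv] at h2
      have h3 := SMulMemClass.smul_mem (w i : ℂ)⁻¹ h2
      rwa [smul_smul, inv_mul_cancel₀ hwi', one_smul] at h3
  exact hv0 (this N (by rw [hN]; trivial))

theorem npos (c : Ctx s V) (i) : 1 ≤ Module.finrank ℂ (V i) := Module.finrank_pos_iff.2
    ((Submodule.nontrivial_iff_ne_bot).2 (c.nb i))

theorem sys (c : Ctx s V) : Sys (fun i => Module.finrank ℂ (V i)) (Rel V) where
  npos := c.npos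
  sym := fun h => h.sym
  func := fun h h' => c.func h h'
  jac := fun h h' => c.jac h h'
  nil := c.nil
  perf := c.perf
  cen := c.cen
  wt := c.wt
  ne := by
    by_contra hne
    rw [not_nonempty_iff] at hne
    apply c.nss
    have := c.dec.2.2
    rw [iSup_of_empty] at this
    exact (LieSubmodule.toSubmodule_eq_bot _).1 this.symm

end Ctx
end SympAux


namespace SympAux

variable {g : Type*} [LieRing g] [LieAlgebra ℂ g] [FiniteDimensional ℂ g]

namespace Ctx
variable {s : LieSubalgebra ℂ g} {k : ℕ} {V : Fin k → Submodule ℂ g}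

theorem nondeg (c : Ctx s V) {i j q} (h : Rel V i j q) {x : g} (hx : x ∈ V i)
    (h0 : ∀ y ∈ V j, ⁅x, y⁆ = 0) : x = 0 := by
  let W : Submodule ℂ g :=
    { carrier := {x | x ∈ V i ∧ ∀ y ∈ V j, ⁅x, y⁆ = 0}
      add_mem' := by
        rintro a b ⟨ha, ha'⟩ ⟨hb, hb'⟩
        exact ⟨add_mem ha hb, fun y hy => by rw [add_lie, ha' y hy, hb' y hy, add_zero]⟩
      zero_mem' := ⟨zero_mem _, fun y _ => zero_lie y⟩
      smul_mem' := by
        rintro a b ⟨ha, ha'⟩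
        exact ⟨Submodule.smul_mem _ a ha, fun y hy => by rw [smul_lie, ha' y hy, smul_zero]⟩ }
  have hx' : x ∈ W := ⟨hx, h0⟩
  rcases c.irr (i := i) W (fun x hx => hx.1) (by
    rintro a ha w ⟨hw, hw'⟩
    refine ⟨c.inv ha hw, fun y hy => ?_⟩
    rw [lie_lie, hw' y hy, hw' _ (c.inv ha hy), lie_zero, sub_zero]) with h1 | h1
  · rw [h1] at hx'; simpa using hx'
  · exfalso
    apply c.nb q
    rw [eq_bot_iff]
    apply h.le
    intro x hx y hy
    rw [← h1] at hx
    simpa using hx.2 y hy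

/-- the bracket as a bilinear map -/
noncomputable def B (_c : Ctx s V) {i j q} (h : Rel V i j q) : V i →ₗ[ℂ] V j →ₗ[ℂ] V q :=
  LinearMap.mk₂ ℂ (fun x y => (⟨⁅(x : g), (y : g)⁆, h.mem x.2 y.2⟩ : V q))
    (fun _ _ _ => Subtype.ext (by simp)) (fun _ _ _ => Subtype.ext (by simp))
    (fun _ _ _ => Subtype.ext (by simp)) (fun _ _ _ => Subtype.ext (by simp))

theorem B_apply (c : Ctx s V) {i j q} (h : Rel V i j q) (x : V i) (y : V j) :
    (c.B h x y : g) = ⁅(x : g), (y : g)⁆ := rfl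

theorem B_inj (c : Ctx s V) {i j q} (h : Rel V i j q) : Function.Injective (c.B h) := by
  rw [← LinearMap.ker_eq_bot, LinearMap.ker_eq_bot']
  intro x hx
  apply Subtype.ext
  apply c.nondeg h x.2
  intro y hy
  have := congrArg (fun f => ((f ⟨y, hy⟩ : V q) : g)) hx
  simpa [B_apply] using this

theorem one (c : Ctx s V) {t} (h : Module.finrank ℂ (V t) = 1) {x : g} (hx : x ∈ V t) (h0 : x ≠ 0) {y : g}
    (hy : y ∈ V t) : ∃ a : ℂ, a • x = y := by
  obtain ⟨a, ha⟩ := (finrank_eq_one_iff_of_nonzero' (⟨x, hx⟩ : V t) (by simpa using h0)).1 h ⟨y, hy⟩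
  exact ⟨a, congrArg Subtype.val ha⟩

theorem T1 (c : Ctx s V) {i j q} (h : Rel V i j q) (hi : Module.finrank ℂ (V i) = 1) :
    Module.finrank ℂ (V q) = Module.finrank ℂ (V j) := by
  obtain ⟨t, ht, ht0⟩ := c.ex i
  have hinj : Function.Injective (c.B h ⟨t, ht⟩) := by
    rw [← LinearMap.ker_eq_bot, LinearMap.ker_eq_bot']
    intro y hy
    apply Subtype.ext
    apply c.nondeg h.sym y.2
    intro t' ht'
    obtain ⟨a, rfl⟩ := c.one hi ht ht0 ht'
    have : ⁅t, (y : g)⁆ = 0 := congrArg Subtype.val hy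
    rw [lie_smul, ← lie_skew, this]; simp
  apply le_antisymm _ (LinearMap.finrank_le_finrank_of_injective hinj)
  have : V q ≤ (V j).map (LieAlgebra.ad ℂ g t : g →ₗ[ℂ] g) := by
    apply h.le
    intro t' ht' y hy
    obtain ⟨a, rfl⟩ := c.one hi ht ht0 ht'
    exact ⟨a • y, Submodule.smul_mem _ _ hy, by simp⟩
  exact (Submodule.finrank_mono this).trans (Submodule.finrank_map_le _ _)

theorem T2 (c : Ctx s V) {i j q} (h : Rel V i j q) (hq : Module.finrank ℂ (V q) = 1) :
    Module.finrank ℂ (V i) = Module.finrank ℂ (V j) := by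
  have := LinearMap.finrank_le_finrank_of_injective (c.B_inj h)
  have h2 := LinearMap.finrank_le_finrank_of_injective (c.B_inj h.sym)
  rw [Module.finrank_linearMap, hq, mul_one] at this h2
  exact le_antisymm this h2

theorem L2 (c : Ctx s V) {i q} (h : Rel V i i q) (hi : Module.finrank ℂ (V i) = 2) :
    Module.finrank ℂ (V q) = 1 := by
  let b := Module.finBasisOfFinrankEq ℂ (V i) hi
  have : V q ≤ Submodule.span ℂ {⁅(b 0 : g), (b 1 : g)⁆} := by
    apply h.le
    intro x hx y hy
    have ex := congrArg Subtype.val (b.sum_repr ⟨x, hx⟩)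
    have ey := congrArg Subtype.val (b.sum_repr ⟨y, hy⟩)
    simp only [Fin.sum_univ_two, Submodule.coe_add, Submodule.coe_smul] at ex ey
    rw [← ex, ← ey, Submodule.mem_span_singleton]
    refine ⟨(b.repr ⟨x, hx⟩) 0 * (b.repr ⟨y, hy⟩) 1 - (b.repr ⟨x, hx⟩) 1 * (b.repr ⟨y, hy⟩) 0, ?_⟩
    simp only [add_lie, lie_add, smul_lie, lie_smul, lie_self, smul_zero, zero_add, add_zero]
    rw [← lie_skew (b 0 : g) (b 1 : g)]
    module
  have h1 := (Submodule.finrank_mono this).trans (finrank_span_le_card ({⁅(b 0 : g), (b 1 : g)⁆} : Set g))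
  simp only [Set.toFinset_singleton, Finset.card_singleton] at h1
  have := c.npos q
  omega

theorem ker_ex {M N : Type*} [AddCommGroup M] [Module ℂ M] [AddCommGroup N] [Module ℂ N]
    [FiniteDimensional ℂ M] [FiniteDimensional ℂ N] (f : M →ₗ[ℂ] N)
    (h : Module.finrank ℂ N < Module.finrank ℂ M) : ∃ x, x ≠ 0 ∧ f x = 0 := by
  have := LinearMap.ker_ne_bot_of_finrank_lt (f := f) h
  obtain ⟨x, hx, h0⟩ := (Submodule.ne_bot_iff _).1 this
  exact ⟨x, h0, hx⟩

theorem al (c : Ctx s V) {u w t y} (h : Rel V u w t) (ht : Module.finrank ℂ (V t) = 1)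
    (hu : 2 ≤ Module.finrank ℂ (V u)) (h2 : Rel V u t y) : ∃ p, Rel V u u p ∧ Rel V p w y := by
  obtain ⟨w0, hw, hw0⟩ := c.ex w
  obtain ⟨u0, hu0, hk⟩ := ker_ex ((c.B h).flip ⟨w0, hw⟩) (by omega)
  have hk : ⁅(u0 : g), w0⁆ = 0 := congrArg Subtype.val hk
  have : ∃ u1 ∈ V u, ⁅u1, w0⁆ ≠ 0 := by
    by_contra hc
    push Not at hc
    exact hw0 (c.nondeg h.sym hw fun y hy => by rw [← lie_skew, hc y hy, neg_zero])
  obtain ⟨u1, hu1, h1⟩ := this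
  have h3 : ⁅(u0 : g), ⁅u1, w0⁆⁆ ≠ 0 := by
    intro h0
    apply hu0
    apply Subtype.ext
    apply c.nondeg h2 u0.2
    intro y hy
    obtain ⟨a, rfl⟩ := c.one ht (h.mem hu1 hw) h1 hy
    rw [lie_smul, h0, smul_zero]
  have h5 := h2.mem u0.2 (h.mem hu1 hw)
  rw [leibniz_lie, hk, lie_zero, add_zero] at h3 h5
  have h4 : ⁅(u0 : g), u1⁆ ≠ 0 := by
    intro h0; rw [h0, zero_lie] at h3; exact h3 rfl
  obtain ⟨p, hp, hp'⟩ := c.nz u0.2 hu1 h4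
  exact ⟨p, hp, c.nz' hp' hw h3 h5⟩

theorem al2 (c : Ctx s V) {u t y} (h : Rel V u u t) (ht : Module.finrank ℂ (V t) = 1)
    (h2 : Rel V u t y) : Module.finrank ℂ (V u) < 3 := by
  by_contra hlt
  obtain ⟨w0, hw, hw0⟩ := c.ex u
  have : ∃ u1 ∈ V u, ⁅u1, w0⁆ ≠ 0 := by
    by_contra hc
    push Not at hc
    exact hw0 (c.nondeg h.sym hw fun y hy => by rw [← lie_skew, hc y hy, neg_zero])
  obtain ⟨u1, hu1, h1⟩ := this
  obtain ⟨u0, hu0, hk⟩ := ker_ex (((c.B h).flip ⟨w0, hw⟩).prod ((c.B h).flip ⟨u1, hu1⟩))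
    (by rw [Module.finrank_prod]; omega)
  have hka : ⁅(u0 : g), w0⁆ = 0 := congrArg (fun p => Subtype.val (Prod.fst p)) hk
  have hkb : ⁅(u0 : g), u1⁆ = 0 := congrArg (fun p => Subtype.val (Prod.snd p)) hk
  apply hu0
  apply Subtype.ext
  apply c.nondeg h2 u0.2
  intro y hy
  obtain ⟨a, rfl⟩ := c.one ht (h.mem hu1 hw) h1 hy
  rw [lie_smul, leibniz_lie, hka, hkb]; simp

theorem L3 (c : Ctx s V) {i q} (h : Rel V i i q) (hi : Module.finrank ℂ (V i) = 3)
    (par : (Module.finrank ℂ (V i) + Module.finrank ℂ (V i) + Module.finrank ℂ (V q)) % 2 = 1) :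
    Module.finrank ℂ (V q) = 3 := by
  let b := Module.finBasisOfFinrankEq ℂ (V i) hi
  have hex : ∀ x ∈ V i, ∃ a0 a1 a2 : ℂ, x = a0 • (b 0 : g) + a1 • (b 1 : g) + a2 • (b 2 : g) := by
    intro x hx
    have ex := congrArg Subtype.val (b.sum_repr ⟨x, hx⟩)
    simp only [Fin.sum_univ_three, Submodule.coe_add, Submodule.coe_smul] at ex
    exact ⟨_, _, _, ex.symm⟩
  have : V q ≤ Submodule.span ℂ (Set.range ![⁅(b 0 : g), (b 1 : g)⁆, ⁅(b 0 : g), (b 2 : g)⁆, ⁅(b 1 : g), (b 2 : g)⁆]) := by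
    apply h.le
    intro x hx y hy
    obtain ⟨a0, a1, a2, rfl⟩ := hex x hx
    obtain ⟨d0, d1, d2, rfl⟩ := hex y hy
    rw [Submodule.mem_span_range_iff_exists_fun]
    refine ⟨![a0 * d1 - a1 * d0, a0 * d2 - a2 * d0, a1 * d2 - a2 * d1], ?_⟩
    simp only [Fin.sum_univ_three, add_lie, lie_add, smul_lie, lie_smul, lie_self, smul_zero, zero_add, add_zero]
    rw [← lie_skew (b 0 : g) (b 1 : g), ← lie_skew (b 0 : g) (b 2 : g), ← lie_skew (b 1 : g) (b 2 : g)]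
    simp only [Matrix.cons_val]
    module
  have h1 := (Submodule.finrank_mono this).trans (finrank_range_le_card _)
  simp at h1
  have := c.npos q
  by_contra hne
  have hq : Module.finrank ℂ (V q) = 1 := by omega
  obtain ⟨t, ht, ht0⟩ := c.ex q
  have hk : ∀ l m, ∃ a : ℂ, a • t = ⁅(b l : g), (b m : g)⁆ := fun l m =>
    c.one hq ht ht0 (h.mem (b l).2 (b m).2)
  obtain ⟨κ01, h01⟩ := hk 0 1
  obtain ⟨κ02, h02⟩ := hk 0 2
  obtain ⟨κ12, h12⟩ := hk 1 2
  have h10 := (lie_skew (b 1 : g) (b 0 : g)).symm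
  have h20 := (lie_skew (b 2 : g) (b 0 : g)).symm
  have h21 := (lie_skew (b 2 : g) (b 1 : g)).symm
  rw [← h01] at h10
  rw [← h02] at h20
  rw [← h12] at h21
  let z : V i := κ12 • b 0 - κ02 • b 1 + κ01 • b 2
  have hz : (z : g) = 0 := by
    apply c.nondeg h z.2
    intro y hy
    obtain ⟨d0, d1, d2, rfl⟩ := hex y hy
    simp only [z, Submodule.coe_add, Submodule.coe_sub, Submodule.coe_smul, add_lie, sub_lie, lie_add, smul_lie, lie_smul, lie_self, smul_zero, zero_add, add_zero, ← h01, ← h02, ← h12, h10, h20, h21]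
    module
  have hz' : z = 0 := Subtype.ext hz
  have hli := Fintype.linearIndependent_iff.1 b.linearIndependent ![κ12, -κ02, κ01] (by
    rw [← hz']; simp [Fin.sum_univ_three, z, sub_eq_add_neg])
  have k12 : κ12 = 0 := by simpa using hli 0
  have k02 : κ02 = 0 := by simpa using hli 1
  have k01 : κ01 = 0 := by simpa using hli 2
  apply c.nb q
  rw [eq_bot_iff]
  apply h.le
  intro x hx y hy
  obtain ⟨a0, a1, a2, rfl⟩ := hex x hx
  obtain ⟨d0, d1, d2, rfl⟩ := hex y hy
  simp [← h01, ← h02, ← h12, h10, h20, h21, k12, k02, k01]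

end Ctx
end SympAux


namespace SympAux

variable {g : Type*} [LieRing g] [LieAlgebra ℂ g] [FiniteDimensional ℂ g]

/-- an `sl₂`-triple spanning `s` -/
structure Tri (s : LieSubalgebra ℂ g) (H E F : g) : Prop where
  t : IsSl2Triple H E F
  hH : H ∈ s
  hE : E ∈ s
  hF : F ∈ s
  span : ∀ x ∈ s, ∃ a b c : ℂ, x = a • E + b • F + c • H

namespace Ctx
variable {s : LieSubalgebra ℂ g} {k : ℕ} {V : Fin k → Submodule ℂ g} {H E F : g}

theorem prim (c : Ctx s V) (T : Tri s H E F) (i) :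
    ∃ v ∈ V i, ∃ μ : ℂ, T.t.HasPrimitiveVectorWith v μ := by
  have hnt : Nontrivial (V i) := (Submodule.nontrivial_iff_ne_bot).2 (c.nb i)
  let Hr : V i →ₗ[ℂ] V i := (LieAlgebra.ad ℂ g H : g →ₗ[ℂ] g).restrict (fun x hx => c.inv T.hH hx)
  obtain ⟨μ₀, hμ₀⟩ := Module.End.exists_eigenvalue Hr
  obtain ⟨m₀, hm₀⟩ := hμ₀.exists_hasEigenvector
  have hm1 : ⁅H, (m₀ : g)⁆ = μ₀ • (m₀ : g) := congrArg Subtype.val hm₀.apply_eq_smul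
  have hm2 : (m₀ : g) ≠ 0 := fun h => hm₀.2 (Subtype.ext h)
  let evals (n : ℕ) : ℂ := μ₀ + 2 * (n : ℂ)
  let e_vecs (n : ℕ) : g := ((LieModule.toEnd ℂ g g E) ^ n) m₀
  have hmem : ∀ n, e_vecs n ∈ V i := by
    intro n
    induction n with
    | zero => simp [e_vecs]
    | succ n ih =>
      simp only [e_vecs]
      rw [← IsSl2Triple.lie_e_pow_toEnd_e]
      exact c.inv T.hE ih
  have h_exists_zero : ∃ k, e_vecs k = 0 := by
    by_contra! contra
    have h_inj : Function.Injective evals := fun a b hab ↦ by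
      simpa [evals, add_right_inj, mul_eq_mul_left_iff, Nat.cast_inj] using hab
    have aux (μ : Set.range evals) : (LieModule.toEnd ℂ g g H).HasEigenvector μ (e_vecs μ.property.choose) := by
      set n := μ.property.choose
      refine ⟨?_, contra n⟩
      rw [Module.End.mem_eigenspace_iff, LieModule.toEnd_apply_apply, ← μ.property.choose_spec]
      exact T.t.lie_h_pow_toEnd_e hm1 n
    have _i := ((LieModule.toEnd ℂ g g H).eigenvectors_linearIndependent (Set.range evals) _ aux).finite
    exact (Set.infinite_range_of_injective h_inj) (Set.toFinite _)
  obtain ⟨n, hn_ne, hn_zero⟩ := Nat.exists_not_and_succ_of_not_zero_of_exists hm2 h_exists_zero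
  exact ⟨e_vecs n, hmem n, evals n, 
    { ne_zero := hn_ne
      lie_h := T.t.lie_h_pow_toEnd_e hm1 n
      lie_e := by rwa [IsSl2Triple.lie_e_pow_toEnd_e n] }⟩

theorem hw (c : Ctx s V) (T : Tri s H E F) (i) : ∃ v ∈ V i, v ≠ 0 ∧ ⁅E, v⁆ = 0 ∧
    ⁅H, v⁆ = ((Module.finrank ℂ (V i) : ℂ) - 1) • v ∧
    (∀ n : ℕ, ((LieModule.toEnd ℂ g g F) ^ n) v ∈ V i) ∧
    (∀ n : ℕ, ⁅H, ((LieModule.toEnd ℂ g g F) ^ n) v⁆ = 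
      ((Module.finrank ℂ (V i) : ℂ) - 1 - 2 * n) • ((LieModule.toEnd ℂ g g F) ^ n) v) ∧
    ((LieModule.toEnd ℂ g g F) ^ (Module.finrank ℂ (V i))) v = 0 ∧
    Submodule.span ℂ (Set.range fun n : Fin (Module.finrank ℂ (V i)) => 
      ((LieModule.toEnd ℂ g g F) ^ (n : ℕ)) v) = V i ∧
    LinearIndependent ℂ (fun n : Fin (Module.finrank ℂ (V i)) => 
      ((LieModule.toEnd ℂ g g F) ^ (n : ℕ)) v) := by
  obtain ⟨v, hv, μ, hP⟩ := c.prim T i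
  obtain ⟨N, rfl⟩ := hP.exists_nat
  have hmem : ∀ n : ℕ, ((LieModule.toEnd ℂ g g F) ^ n) v ∈ V i := by
    intro n
    induction n with
    | zero => simpa
    | succ n ih =>
      rw [← hP.lie_f_pow_toEnd_f]
      exact c.inv T.hF ih
  let ψ : Fin (N + 1) → g := fun n => ((LieModule.toEnd ℂ g g F) ^ (n : ℕ)) v
  have hli : LinearIndependent ℂ ψ := by
    refine Module.End.eigenvectors_linearIndependent' (LieModule.toEnd ℂ g g H)
      (fun n : Fin (N + 1) => (N : ℂ) - 2 * (n : ℕ)) ?_ ψ ?_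
    · intro a b hab
      have : ((a : ℕ) : ℂ) = (b : ℕ) := by simpa using hab
      exact Fin.ext (by exact_mod_cast this)
    · intro n
      rw [Module.End.hasEigenvector_iff, Module.End.mem_eigenspace_iff]
      exact ⟨hP.lie_h_pow_toEnd_f n, hP.pow_toEnd_f_ne_zero_of_eq_nat rfl (Nat.lt_succ_iff.1 n.2)⟩
  have h0 := hP.pow_toEnd_f_eq_zero_of_eq_nat rfl
  have hsp : Submodule.span ℂ (Set.range ψ) = V i := by
    have hle : Submodule.span ℂ (Set.range ψ) ≤ V i := by
      rw [Submodule.span_le]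
      rintro _ ⟨n, rfl⟩
      exact hmem n
    have hall : ∀ n : ℕ, n ≤ N + 1 → ((LieModule.toEnd ℂ g g F) ^ n) v ∈ Submodule.span ℂ (Set.range ψ) := by
      intro n hn
      rcases hn.lt_or_eq with h | rfl
      · exact Submodule.subset_span ⟨⟨n, h⟩, rfl⟩
      · rw [h0]; exact zero_mem _
    rcases c.irr (i := i) _ hle (by
      intro x hx w hw
      obtain ⟨a, b, d, rfl⟩ := T.span x hx
      induction hw using Submodule.span_induction with
      | zero => simp
      | add x y _ _ hx hy => rw [lie_add]; exact add_mem hx hy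
      | smul r x _ hx => rw [lie_smul]; exact Submodule.smul_mem _ _ hx
      | mem x hx =>
        obtain ⟨⟨n, hn⟩, rfl⟩ := hx
        simp only [ψ, add_lie, smul_lie]
        refine add_mem (add_mem (Submodule.smul_mem _ _ ?_) (Submodule.smul_mem _ _ ?_)) (Submodule.smul_mem _ _ ?_)
        · cases n with
          | zero => simp [hP.lie_e]
          | succ n => rw [hP.lie_e_pow_succ_toEnd_f]; exact Submodule.smul_mem _ _ (hall _ (by omega))
        · rw [hP.lie_f_pow_toEnd_f]; exact hall _ (by omega)
        · rw [hP.lie_h_pow_toEnd_f]; exact Submodule.smul_mem _ _ (hall _ (by omega))) with h | h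
    · exfalso
      have : v ∈ Submodule.span ℂ (Set.range ψ) := by simpa using hall 0 (by omega)
      rw [h] at this
      exact hP.ne_zero (by simpa using this)
    · exact h
  have hfr : Module.finrank ℂ (V i) = N + 1 := by
    rw [← hsp, finrank_span_eq_card hli]; simp
  rw [hfr]
  refine ⟨v, hv, hP.ne_zero, hP.lie_e, ?_, hmem, ?_, h0, hsp, hli⟩
  · rw [hP.lie_h]; simp
  · intro n; rw [hP.lie_h_pow_toEnd_f]; simp

theorem wtpar (c : Ctx s V) (T : Tri s H E F) {i} {x : g} (hx : x ∈ V i) {μ : ℂ} (h : ⁅H, x⁆ = μ • x)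
    (h0 : x ≠ 0) : ∃ m < Module.finrank ℂ (V i), μ = (Module.finrank ℂ (V i) : ℂ) - 1 - 2 * (m : ℕ) := by
  obtain ⟨v, hv, hv0, hE, hH, hmem, hwt, hn, hsp, hli⟩ := c.hw T i
  rw [← hsp, Submodule.mem_span_range_iff_exists_fun] at hx
  obtain ⟨a, rfl⟩ := hx
  by_contra hc
  push Not at hc
  apply h0
  rw [lie_sum, Finset.smul_sum, ← sub_eq_zero, ← Finset.sum_sub_distrib] at h
  have := Fintype.linearIndependent_iff.1 hli 
    (fun m => a m * ((Module.finrank ℂ (V i) : ℂ) - 1 - 2 * (m : ℕ) - μ)) (by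
      rw [← h]
      apply Finset.sum_congr rfl
      intro m _
      rw [lie_smul, hwt]
      module)
  apply Finset.sum_eq_zero
  intro m _
  have h2 := this m
  rw [mul_eq_zero, sub_eq_zero] at h2
  rcases h2 with h2 | h2
  · rw [h2, zero_smul]
  · exact absurd h2.symm (hc m m.2)

theorem wadd {x y : g} {μ ν : ℂ} (hx : ⁅H, x⁆ = μ • x) (hy : ⁅H, y⁆ = ν • y) :
    ⁅H, ⁅x, y⁆⁆ = (μ + ν) • ⁅x, y⁆ := by
  rw [leibniz_lie, hx, hy, smul_lie, lie_smul, add_smul]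

theorem wF (T : Tri s H E F) {x : g} {μ : ℂ} (hx : ⁅H, x⁆ = μ • x) :
    ⁅H, ⁅F, x⁆⁆ = (μ - 2) • ⁅F, x⁆ := by
  have : ⁅H, F⁆ = (-2 : ℂ) • F := by rw [T.t.lie_lie_smul_f ℂ]; simp
  rw [wadd this hx]; congr 1; ring

theorem par (c : Ctx s V) (T : Tri s H E F) {i j q} (h : Rel V i j q) :
    (Module.finrank ℂ (V i) + Module.finrank ℂ (V j) + Module.finrank ℂ (V q)) % 2 = 1 := by
  obtain ⟨v, hv, hv0, hE, hH, hmem, hwt, hn, hsp, hli⟩ := c.hw T i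
  obtain ⟨v', hv', hv0', hE', hH', hmem', hwt', hn', hsp', hli'⟩ := c.hw T j
  have : ∃ m m' : ℕ, ⁅((LieModule.toEnd ℂ g g F) ^ m) v, ((LieModule.toEnd ℂ g g F) ^ m') v'⁆ ≠ 0 := by
    by_contra hc
    push Not at hc
    apply c.nb q
    rw [eq_bot_iff]
    apply h.le
    intro x hx y hy
    rw [← hsp, Submodule.mem_span_range_iff_exists_fun] at hx
    rw [← hsp', Submodule.mem_span_range_iff_exists_fun] at hy
    obtain ⟨a, rfl⟩ := hx
    obtain ⟨b, rfl⟩ := hy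
    rw [Submodule.mem_bot, sum_lie]
    apply Finset.sum_eq_zero
    intro i _
    rw [lie_sum]
    apply Finset.sum_eq_zero
    intro j _
    rw [smul_lie, lie_smul, hc, smul_zero, smul_zero]
  obtain ⟨m, m', hne⟩ := this
  obtain ⟨l, hl, e⟩ := c.wtpar T (h.mem (hmem m) (hmem' m')) (wadd (hwt m) (hwt' m')) hne
  have e' : ((Module.finrank ℂ (V i) + Module.finrank ℂ (V j) + 2 * l : ℕ) : ℂ) = 
    (Module.finrank ℂ (V q) + 1 + 2 * m + 2 * m' : ℕ) := by
    push_cast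
    linear_combination e
  have e2 : Module.finrank ℂ (V i) + Module.finrank ℂ (V j) + 2 * l = 
    Module.finrank ℂ (V q) + 1 + 2 * m + 2 * m' := by exact_mod_cast e'
  omega

theorem hw2 (c : Ctx s V) (T : Tri s H E F) {i} (hi : Module.finrank ℂ (V i) = 2) : ∃ v ∈ V i, v ≠ 0 ∧
    ⁅H, v⁆ = (1 : ℂ) • v ∧ ∀ x ∈ V i, ∃ a b : ℂ, x = a • v + b • ⁅F, v⁆ := by
  obtain ⟨v, hv, hv0, hE, hH, hmem, hwt, hn, hsp, hli⟩ := c.hw T i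
  refine ⟨v, hv, hv0, ?_, ?_⟩
  · rw [hH, hi]; norm_num
  · rw [hi] at hsp
    intro x hx
    rw [← hsp, Submodule.mem_span_range_iff_exists_fun] at hx
    obtain ⟨a, rfl⟩ := hx
    exact ⟨a 0, a 1, by simp [Fin.sum_univ_two]⟩

theorem hw3 (c : Ctx s V) (T : Tri s H E F) {i} (hi : Module.finrank ℂ (V i) = 3) : ∃ v ∈ V i, v ≠ 0 ∧
    ⁅E, v⁆ = 0 ∧
    ⁅H, v⁆ = (2 : ℂ) • v ∧ ∀ x ∈ V i, ∃ a b d : ℂ, x = a • v + b • ⁅F, v⁆ + d • ⁅F, ⁅F, v⁆⁆ := by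
  obtain ⟨v, hv, hv0, hE, hH, hmem, hwt, hn, hsp, hli⟩ := c.hw T i
  refine ⟨v, hv, hv0, hE, ?_, ?_⟩
  · rw [hH, hi]; norm_num
  · rw [hi] at hsp
    intro x hx
    rw [← hsp, Submodule.mem_span_range_iff_exists_fun] at hx
    obtain ⟨a, rfl⟩ := hx
    exact ⟨a 0, a 1, a 2, by simp [Fin.sum_univ_three, pow_two]⟩

theorem wt2 (c : Ctx s V) (T : Tri s H E F) {i} (hi : Module.finrank ℂ (V i) = 2) {x : g} (hx : x ∈ V i)
    {μ : ℂ} (h : ⁅H, x⁆ = μ • x) (h1 : μ ≠ 1) (h2 : μ ≠ -1) : x = 0 := by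
  by_contra h0
  obtain ⟨m, hm, e⟩ := c.wtpar T hx h h0
  rw [hi] at e hm
  interval_cases m
  · apply h1; rw [e]; norm_num
  · apply h2; rw [e]; norm_num

theorem wt1 (c : Ctx s V) (T : Tri s H E F) {i} (hi : Module.finrank ℂ (V i) = 1) {x : g} (hx : x ∈ V i)
    {μ : ℂ} (h : ⁅H, x⁆ = μ • x) (h1 : μ ≠ 0) : x = 0 := by
  rw [c.triv hi T.hH hx] at h
  exact (smul_eq_zero.1 h.symm).resolve_left h1

theorem gam (c : Ctx s V) (T : Tri s H E F) {a b d z} (hb : Module.finrank ℂ (V b) = 3)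
    (ha : Module.finrank ℂ (V a) = 2) (hd : Module.finrank ℂ (V d) = 2)
    (h1 : Rel V b a d) (h2 : Rel V b d z) : ∃ q, Rel V b b q := by
  by_contra hc
  push Not at hc
  have hbb : ∀ x ∈ V b, ∀ y ∈ V b, ⁅x, y⁆ = 0 := by
    intro x hx y hy
    by_contra h0
    obtain ⟨q, hq, -⟩ := c.nz hx hy h0
    exact hc q hq
  obtain ⟨u, hu, hu0, huE, huH, husp⟩ := c.hw3 T hb
  obtain ⟨v, hv, hv0, hvH, hvsp⟩ := c.hw2 T ha
  have hFu := c.inv T.hF hu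
  have hFFu := c.inv T.hF hFu
  have e1 : ⁅u, v⁆ = 0 := c.wt2 T hd (h1.mem hu hv) (wadd huH hvH) (by norm_num) (by norm_num)
  set u' := ⁅F, ⁅F, u⁆⁆ with hu'
  have hw' : ⁅H, u'⁆ = (2 - 2 - 2 : ℂ) • u' := wF T (wF T huH)
  set w := ⁅u', v⁆ with hw
  have hwm : w ∈ V d := h1.mem hFFu hv
  have hwH : ⁅H, w⁆ = (2 - 2 - 2 + 1 : ℂ) • w := wadd hw' hvH
  have e2 : ⁅u, w⁆ = 0 := by
    rw [hw, leibniz_lie, hbb u hu u' hFFu, e1]; simp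
  have eFw : ⁅F, w⁆ = 0 := c.wt2 T hd (c.inv T.hF hwm) (wF T hwH) (by norm_num) (by norm_num)
  have e3 : ⁅⁅F, u⁆, w⁆ = 0 := by
    rw [lie_lie, e2, eFw]; simp
  have e4 : ⁅u', w⁆ = 0 := by
    rw [hu', lie_lie, e3, eFw]; simp
  have hw0 : w = 0 := by
    apply c.nondeg h2.sym hwm
    intro y hy
    obtain ⟨α, β, γ, rfl⟩ := husp y hy
    rw [← lie_skew]
    simp [e2, e3, e4]
  -- go back up with `E`
  have eEu' : ⁅E, u'⁆ = (2 : ℂ) • ⁅F, u⁆ := by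
    rw [hu', leibniz_lie, leibniz_lie E F u, huE, T.t.lie_e_f, wF T huH, huH]; simp
  have eEv : ⁅E, v⁆ = 0 := by
    have hE : ⁅H, E⁆ = (2 : ℂ) • E := T.t.lie_h_e_smul ℂ
    exact c.wt2 T ha (c.inv T.hE hv) (wadd hE hvH) (by norm_num) (by norm_num)
  have e5 : ⁅⁅F, u⁆, v⁆ = 0 := by
    have : ⁅E, w⁆ = 0 := by rw [hw0, lie_zero]
    rw [hw, leibniz_lie, eEu', eEv, lie_zero, add_zero, smul_lie] at this
    exact (smul_eq_zero.1 this).resolve_left (by norm_num)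
  apply hv0
  apply c.nondeg h1.sym hv
  intro y hy
  obtain ⟨α, β, γ, rfl⟩ := husp y hy
  rw [← lie_skew]
  have e6 : ⁅u', v⁆ = 0 := hw0
  simp [e1, e5, e6]

theorem del (c : Ctx s V) (T : Tri s H E F) {a t d r} (ha : Module.finrank ℂ (V a) = 2)
    (h1 : Rel V a a t) (ht : Module.finrank ℂ (V t) = 1) (h2 : Rel V a t d) (h3 : Rel V a d r) :
    Module.finrank ℂ (V r) ≠ 1 := by
  intro hr
  obtain ⟨v, hv, hv0, hvH, hvsp⟩ := c.hw2 T ha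
  have hFv := c.inv T.hF hv
  set τ := ⁅v, ⁅F, v⁆⁆ with hτ
  have hτm : τ ∈ V t := h1.mem hv hFv
  have hτ0 : τ ≠ 0 := by
    intro h0
    apply hv0
    apply c.nondeg h1 hv
    intro y hy
    obtain ⟨α, β, rfl⟩ := hvsp y hy
    simp [h0, ← hτ]
  set y := ⁅τ, v⁆ with hy
  have hym : y ∈ V d := h2.sym.mem hτm hv
  have hyH : ⁅H, y⁆ = (0 + 1 : ℂ) • y := wadd (by rw [c.triv ht T.hH hτm, zero_smul]) hvH
  have e1 : ⁅v, y⁆ = 0 := c.wt1 T hr (h3.mem hv hym) (wadd hvH hyH) (by norm_num)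
  have eFy : ⁅F, y⁆ = ⁅τ, ⁅F, v⁆⁆ := by
    rw [hy, leibniz_lie, c.triv ht T.hF hτm]; simp
  have e2 : ⁅⁅F, v⁆, y⁆ + ⁅v, ⁅F, y⁆⁆ = 0 := by
    rw [← leibniz_lie, e1, lie_zero]
  have e3 : ⁅y, ⁅F, v⁆⁆ + ⁅v, ⁅F, y⁆⁆ = 0 := by
    rw [eFy, hy, ← leibniz_lie, ← hτ, lie_self]
  have e4 : ⁅y, ⁅F, v⁆⁆ = 0 := by
    rw [← lie_skew] at e2
    have : (2 : ℂ) • ⁅y, ⁅F, v⁆⁆ = 0 := by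
      rw [two_smul]
      have e5 := eq_neg_of_add_eq_zero_right e3
      rw [e5] at e2
      rw [← neg_eq_zero, neg_add]
      exact e2
    exact (smul_eq_zero.1 this).resolve_left (by norm_num)
  have hy0 : y = 0 := by
    apply c.nondeg h3.sym hym
    intro x hx
    obtain ⟨α, β, rfl⟩ := hvsp x hx
    rw [← lie_skew] at e1
    simp [neg_eq_zero.1 e1, e4]
  apply hv0
  apply c.nondeg h2 hv
  intro x hx
  obtain ⟨α, rfl⟩ := c.one ht hτm hτ0 hx
  have : ⁅v, τ⁆ = 0 := by rw [← lie_skew, ← hy, hy0, neg_zero]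
  rw [lie_smul, this, smul_zero]

end Ctx
end SympAux


namespace SympAux

variable {g : Type*} [LieRing g] [LieAlgebra ℂ g] [FiniteDimensional ℂ g]

namespace Ctx
variable {s : LieSubalgebra ℂ g} {k : ℕ} {V : Fin k → Submodule ℂ g} {H E F : g}

theorem P_comm (c : Ctx s V) {a : g} (ha : a ∈ s) (i) (x : g) : c.P i ⁅a, x⁆ = ⁅a, c.P i x⁆ := by
  refine c.ind (p := fun x => c.P i ⁅a, x⁆ = ⁅a, c.P i x⁆) ?_ ?_ ?_ x
  · intro x hx; rw [c.P_s (s.lie_mem ha hx), c.P_s hx, lie_zero]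
  · intro j x hx
    by_cases hj : j = i
    · subst hj; rw [c.P_self (c.inv ha hx), c.P_self hx]
    · rw [c.P_ne hj (c.inv ha hx), c.P_ne hj hx, lie_zero]
  · intro x y hx hy
    rw [lie_add, map_add, hx, hy, map_add, lie_add]

theorem P_sum (c : Ctx s V) {x : g} (hx : x ∈ LieAlgebra.radical ℂ g) : x = ∑ i, c.P i x := by
  have hx' : x ∈ ⨆ i, V i := by rw [c.dec.2.2]; exact hx
  refine Submodule.iSup_induction V (motive := fun x => x = ∑ i, c.P i x) hx' ?_ ?_ ?_
  · intro j x hx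
    rw [Finset.sum_eq_single j, c.P_self hx]
    · intro i _ hi; exact c.P_ne hi.symm hx
    · simp
  · simp
  · intro x y hx hy
    simp only [map_add, Finset.sum_add_distrib]
    rw [← hx, ← hy]

theorem rad_zero (c : Ctx s V) (T : Tri s H E F) {x : g} (hx : x ∈ LieAlgebra.radical ℂ g) {μ : ℂ}
    (h : ⁅H, x⁆ = μ • x) (h0 : ∀ i, ∀ y ∈ V i, ⁅H, y⁆ = μ • y → y = 0) : x = 0 := by
  rw [c.P_sum hx]
  apply Finset.sum_eq_zero
  intro i _
  apply h0 i _ (c.P_mem i x)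
  rw [← c.P_comm T.hH, h, map_smul]

/-- the triple product -/
def S (F x y w : g) : g := ⁅⁅x, ⁅F, y⁆⁆, w⁆

/-- the space of weight-one vectors in the radical -/
def Q (H x : g) : Prop := x ∈ LieAlgebra.radical ℂ g ∧ ⁅H, x⁆ = (1 : ℂ) • x

section

theorem Q_lie (c : Ctx s V) (T : Tri s H E F)
    (hd : ∀ i, Module.finrank ℂ (V i) = 2 ∨ Module.finrank ℂ (V i) = 1) {x y : g} (hx : Q H x) (hy : Q H y) : ⁅x, y⁆ = 0 := by
  apply c.rad_zero T (lie_mem_left ℂ g _ x y hx.1) (wadd hx.2 hy.2)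
  intro i y hy h
  rcases hd i with h' | h'
  · exact c.wt2 T h' hy h (by norm_num) (by norm_num)
  · exact c.wt1 T h' hy h (by norm_num)

theorem Q_symm (c : Ctx s V) (T : Tri s H E F)
    (hd : ∀ i, Module.finrank ℂ (V i) = 2 ∨ Module.finrank ℂ (V i) = 1) {x y : g} (hx : Q H x) (hy : Q H y) : ⁅x, ⁅F, y⁆⁆ = ⁅y, ⁅F, x⁆⁆ := by
  have h := c.Q_lie T hd hx hy
  have : ⁅F, ⁅x, y⁆⁆ = 0 := by rw [h, lie_zero]
  rw [leibniz_lie, ← lie_skew, neg_add_eq_zero] at this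
  exact this.symm

theorem Q_S (c : Ctx s V) (T : Tri s H E F)
    (hd : ∀ i, Module.finrank ℂ (V i) = 2 ∨ Module.finrank ℂ (V i) = 1) {x y w : g} (hx : Q H x) (hy : Q H y) (hw : Q H w) : Q H (S F x y w) := by
  refine ⟨lie_mem_left ℂ g _ _ _ (lie_mem_left ℂ g _ _ _ hx.1), ?_⟩
  rw [S, wadd (wadd hx.2 (wF T hy.2)) hw.2]; norm_num

theorem S_12 (c : Ctx s V) (T : Tri s H E F)
    (hd : ∀ i, Module.finrank ℂ (V i) = 2 ∨ Module.finrank ℂ (V i) = 1) {x y w : g} (hx : Q H x) (hy : Q H y) : S F x y w = S F y x w := by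
  rw [S, S, c.Q_symm T hd hx hy]

theorem S_13 (c : Ctx s V) (T : Tri s H E F)
    (hd : ∀ i, Module.finrank ℂ (V i) = 2 ∨ Module.finrank ℂ (V i) = 1) {x y w : g} (hx : Q H x) (hy : Q H y) (hw : Q H w) : S F x y w = S F w y x := by
  rw [S, S, lie_lie, c.Q_lie T hd hx hw, lie_zero, sub_zero, ← lie_skew, ← neg_lie, lie_skew]

theorem S_zero (c : Ctx s V) (T : Tri s H E F)
    (hd : ∀ i, Module.finrank ℂ (V i) = 2 ∨ Module.finrank ℂ (V i) = 1) {x : g} (hx : Q H x) : S F (S F x x x) x x = 0 := by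
  have hy := c.Q_S T hd hx hx hx
  have h1 := c.Q_symm T hd hx hy
  have hT : ⁅F, ⁅x, ⁅F, x⁆⁆⁆ = 0 := by
    have hz : ⁅x, ⁅F, ⁅F, x⁆⁆⁆ = 0 := by
      apply c.rad_zero T (lie_mem_left ℂ g _ _ _ hx.1) (wadd hx.2 (wF T (wF T hx.2)))
      intro i y hy h
      rcases hd i with h' | h'
      · exact c.wt2 T h' hy h (by norm_num) (by norm_num)
      · exact c.wt1 T h' hy h (by norm_num)
    rw [leibniz_lie, lie_self, hz, add_zero]
  have eFy : ⁅F, S F x x x⁆ = ⁅⁅x, ⁅F, x⁆⁆, ⁅F, x⁆⁆ := by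
    rw [S, leibniz_lie, hT, zero_lie, zero_add]
  have e3 : ⁅S F x x x, ⁅F, x⁆⁆ + ⁅x, ⁅F, S F x x x⁆⁆ = 0 := by
    rw [eFy, S, ← leibniz_lie, lie_self]
  rw [h1, ← two_smul ℂ] at e3
  have e4 := (smul_eq_zero.1 e3).resolve_left (by norm_num)
  rw [S, e4, zero_lie]

theorem wt1_mul (c : Ctx s V) (T : Tri s H E F)
    (hd : ∀ i, Module.finrank ℂ (V i) = 2 ∨ Module.finrank ℂ (V i) = 1) {i} (hi : Module.finrank ℂ (V i) = 2) {v : g} (hv : v ∈ V i) (hv0 : v ≠ 0)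
    (hvH : ⁅H, v⁆ = (1 : ℂ) • v) (hsp : ∀ x ∈ V i, ∃ a b : ℂ, x = a • v + b • ⁅F, v⁆)
    {x : g} (hx : x ∈ V i) (hxH : ⁅H, x⁆ = (1 : ℂ) • x) : ∃ a : ℂ, x = a • v := by
  obtain ⟨a, b, rfl⟩ := hsp x hx
  refine ⟨a, ?_⟩
  rw [lie_add, lie_smul, lie_smul, hvH, wF T hvH] at hxH
  have : (2 : ℂ) • (b • ⁅F, v⁆) = 0 := by
    rw [← sub_eq_zero] at hxH
    rw [← neg_eq_zero, ← hxH]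
    module
  rw [(smul_eq_zero.1 this).resolve_left (by norm_num), add_zero]

/-- the generators' bracket is in a one-dimensional module -/
theorem pair_mem (c : Ctx s V) (T : Tri s H E F)
    (hd : ∀ i, Module.finrank ℂ (V i) = 2 ∨ Module.finrank ℂ (V i) = 1) {i j} {x y : g} (hxi : x ∈ V i) (hyj : y ∈ V j) (hx : Q H x) (hy : Q H y)
    (h0 : ⁅x, ⁅F, y⁆⁆ ≠ 0) : ∃ t, Rel V i j t ∧ Module.finrank ℂ (V t) = 1 ∧ ⁅x, ⁅F, y⁆⁆ ∈ V t := by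
  obtain ⟨t, ht, hm⟩ := c.nz hxi (c.inv T.hF hyj) h0
  refine ⟨t, ht, ?_, hm⟩
  rcases hd t with h' | h'
  · exfalso
    exact h0 (c.wt2 T h' hm (wadd hx.2 (wF T hy.2)) (by norm_num) (by norm_num))
  · exact h'

theorem pair_ne (c : Ctx s V) (T : Tri s H E F)
    (hd : ∀ i, Module.finrank ℂ (V i) = 2 ∨ Module.finrank ℂ (V i) = 1) {i j t} (h : Rel V i j t) {x y : g} (hxi : x ∈ V i) (hyj : y ∈ V j) (hx : Q H x) (hy : Q H y)
    (hxsp : ∀ x' ∈ V i, ∃ a b : ℂ, x' = a • x + b • ⁅F, x⁆)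
    (hysp : ∀ x' ∈ V j, ∃ a b : ℂ, x' = a • y + b • ⁅F, y⁆) : ⁅x, ⁅F, y⁆⁆ ≠ 0 := by
  intro h0
  have h1 := c.Q_symm T hd hx hy
  rw [h0] at h1
  have h2 := c.Q_lie T hd hx hy
  have h3 : ⁅⁅F, x⁆, ⁅F, y⁆⁆ = 0 := by
    apply c.rad_zero T (lie_mem_left ℂ g _ _ _ (lie_mem_right ℂ g _ _ _ hx.1)) (wadd (wF T hx.2) (wF T hy.2))
    intro i y hy h
    rcases hd i with h' | h'
    · exact c.wt2 T h' hy h (by norm_num) (by norm_num)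
    · exact c.wt1 T h' hy h (by norm_num)
  have h4 : ⁅⁅F, x⁆, y⁆ = 0 := by rw [← lie_skew, ← h1, neg_zero]
  apply c.nb t
  rw [eq_bot_iff]
  apply h.le
  intro x' hx' y' hy'
  obtain ⟨a, b, rfl⟩ := hxsp x' hx'
  obtain ⟨a', b', rfl⟩ := hysp y' hy'
  simp [h0, h2, h3, h4]

theorem S_ne (c : Ctx s V) (T : Tri s H E F)
    (hd : ∀ i, Module.finrank ℂ (V i) = 2 ∨ Module.finrank ℂ (V i) = 1) {i j t l q} (h : Rel V i j t) (ht : Module.finrank ℂ (V t) = 1) (h' : Rel V t l q)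
    {x y w : g} (hxi : x ∈ V i) (hyj : y ∈ V j) (hwl : w ∈ V l) (hx : Q H x) (hy : Q H y) (_hw : Q H w)
    (hxsp : ∀ x' ∈ V i, ∃ a b : ℂ, x' = a • x + b • ⁅F, x⁆)
    (hysp : ∀ x' ∈ V j, ∃ a b : ℂ, x' = a • y + b • ⁅F, y⁆)
    (hwsp : ∀ x' ∈ V l, ∃ a b : ℂ, x' = a • w + b • ⁅F, w⁆) :
    S F x y w ≠ 0 ∧ S F x y w ∈ V q := by
  have hm : ⁅x, ⁅F, y⁆⁆ ∈ V t := h.mem hxi (c.inv T.hF hyj)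
  refine ⟨?_, h'.mem hm hwl⟩
  intro h0
  apply c.pair_ne T hd h hxi hyj hx hy hxsp hysp
  apply c.nondeg h' hm
  intro w' hw'
  obtain ⟨a, b, rfl⟩ := hwsp w' hw'
  rw [S] at h0
  have h1 : ⁅F, ⁅⁅x, ⁅F, y⁆⁆, w⁆⁆ = 0 := by rw [h0, lie_zero]
  rw [leibniz_lie, c.triv ht T.hF hm, zero_lie, zero_add] at h1
  rw [lie_add, lie_smul, lie_smul, h0, h1]; simp

end

open Polynomial in
theorem polyzero (p0 p1 p2 p3 q0 q1 q2 : ℂ)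
    (h : ∀ β : ℂ, (p0 + p1 * β + p2 * β ^ 2 + p3 * β ^ 3) * (q0 + q1 * β + q2 * β ^ 2) = 0) :
    (p0 = 0 ∧ p1 = 0 ∧ p2 = 0 ∧ p3 = 0) ∨ (q0 = 0 ∧ q1 = 0 ∧ q2 = 0) := by
  have hpoly : (C p0 + C p1 * X + C p2 * X ^ 2 + C p3 * X ^ 3 : ℂ[X]) *
      (C q0 + C q1 * X + C q2 * X ^ 2) = 0 := by
    apply Polynomial.funext
    intro β
    simpa using h β
  rcases mul_eq_zero.1 hpoly with hp | hp
  · left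
    have h (n : ℕ) := congrArg (fun p => Polynomial.coeff p n) hp
    refine ⟨by simpa [coeff_X, coeff_X_pow, coeff_C] using h 0,
      by simpa [coeff_X, coeff_X_pow, coeff_C] using h 1,
      by simpa [coeff_X, coeff_X_pow, coeff_C] using h 2,
      by simpa [coeff_X, coeff_X_pow, coeff_C] using h 3⟩
  · right
    have h (n : ℕ) := congrArg (fun p => Polynomial.coeff p n) hp
    refine ⟨by simpa [coeff_X, coeff_X_pow, coeff_C] using h 0,
      by simpa [coeff_X, coeff_X_pow, coeff_C] using h 1,
      by simpa [coeff_X, coeff_X_pow, coeff_C] using h 2⟩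

theorem fg (c : Ctx s V) (T : Tri s H E F) (a b d z : Fin k)
    (hall : ∀ i, i = a ∨ i = b ∨ i = d ∨ i = z ∨ Module.finrank ℂ (V i) = 1)
    (ha : Module.finrank ℂ (V a) = 2) (hb : Module.finrank ℂ (V b) = 2)
    (hdd : Module.finrank ℂ (V d) = 2) (hz : Module.finrank ℂ (V z) = 2) (hdz : d ≠ z)
    (hzc : ∀ i q, ¬ Rel V z i q)
    (h1 : ∀ t g' q, Module.finrank ℂ (V t) = 1 → (g' = a ∨ g' = b) → Rel V t g' q → q = d ∨ q = z)
    (h2 : ∀ u t u' y, (u = a ∨ u = b) → (u' = a ∨ u' = b) → Rel V d u t → Rel V t u' y → y = z)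
    (h3 : ∃ u u' u'' t, (u = a ∨ u = b) ∧ (u' = a ∨ u' = b) ∧ (u'' = a ∨ u'' = b) ∧
      Module.finrank ℂ (V t) = 1 ∧ Rel V u' u'' t ∧ Rel V t u d)
    (h4 : ∃ u u' t, (u = a ∨ u = b) ∧ (u' = a ∨ u' = b) ∧
      Module.finrank ℂ (V t) = 1 ∧ Rel V d u t ∧ Rel V t u' z) : False := by
  have hd : ∀ i, Module.finrank ℂ (V i) = 2 ∨ Module.finrank ℂ (V i) = 1 := by
    intro i
    rcases hall i with rfl | rfl | rfl | rfl | h <;> simp [*]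
  have : ∀ i, ∃ v, Module.finrank ℂ (V i) = 2 → v ∈ V i ∧ v ≠ 0 ∧ ⁅H, v⁆ = (1 : ℂ) • v ∧ 
      ∀ x ∈ V i, ∃ a b : ℂ, x = a • v + b • ⁅F, v⁆ := by
    intro i
    by_cases h : Module.finrank ℂ (V i) = 2
    · obtain ⟨v, hv⟩ := c.hw2 T h
      exact ⟨v, fun _ => hv⟩
    · exact ⟨0, fun h' => absurd h' h⟩
  choose v hv using this
  have hQ : ∀ i, Module.finrank ℂ (V i) = 2 → Q H (v i) := fun i hi =>
    ⟨c.rad_mem (hv i hi).1, (hv i hi).2.2.1⟩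
  have hgen : ∀ u, (u = a ∨ u = b) → Module.finrank ℂ (V u) = 2 := by
    rintro u (rfl | rfl) <;> assumption
  -- structure of `S` on generators
  have hf : ∀ u u' u'', (u = a ∨ u = b) → (u' = a ∨ u' = b) → (u'' = a ∨ u'' = b) →
      ∃ f : ℂ, ∃ w ∈ V z, S F (v u) (v u') (v u'') = f • v d + w := by
    intro u u' u'' hu hu' hu''
    have gu := hgen u hu
    have gu' := hgen u' hu'
    have gu'' := hgen u'' hu''
    by_cases h0 : S F (v u) (v u') (v u'') = 0
    · exact ⟨0, 0, zero_mem _, by simp [h0]⟩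
    have h0' : ⁅v u, ⁅F, v u'⁆⁆ ≠ 0 := by
      intro h; apply h0; rw [S, h, zero_lie]
    obtain ⟨t, ht, ht1, hm⟩ := c.pair_mem T hd (hv u gu).1 (hv u' gu').1 (hQ u gu) (hQ u' gu') h0'
    obtain ⟨q, hq, hqm⟩ := c.nz hm (hv u'' gu'').1 h0
    rcases h1 t u'' q ht1 hu'' hq with rfl | rfl
    · obtain ⟨f, e⟩ := c.wt1_mul T hd hdd (hv q hdd).1 (hv q hdd).2.1 (hv q hdd).2.2.1 (hv q hdd).2.2.2
        hqm (c.Q_S T hd (hQ u gu) (hQ u' gu') (hQ u'' gu'')).2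
      exact ⟨f, 0, zero_mem _, by rw [add_zero]; exact e⟩
    · exact ⟨0, _, hqm, by rw [zero_smul, zero_add]; rfl⟩
  have hg : ∀ u u', (u = a ∨ u = b) → (u' = a ∨ u' = b) →
      ∃ f : ℂ, S F (v d) (v u) (v u') = f • v z := by
    intro u u' hu hu'
    have gu := hgen u hu
    have gu' := hgen u' hu'
    by_cases h0 : S F (v d) (v u) (v u') = 0
    · exact ⟨0, by simp [h0]⟩
    have h0' : ⁅v d, ⁅F, v u⁆⁆ ≠ 0 := by
      intro h; apply h0; rw [S, h, zero_lie]
    obtain ⟨t, ht, ht1, hm⟩ := c.pair_mem T hd (hv d hdd).1 (hv u gu).1 (hQ d hdd) (hQ u gu) h0'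
    obtain ⟨q, hq, hqm⟩ := c.nz hm (hv u' gu').1 h0
    obtain rfl := h2 u t u' q hu hu' ht hq
    exact c.wt1_mul T hd hz (hv q hz).1 (hv q hz).2.1 (hv q hz).2.2.1 (hv q hz).2.2.2
        hqm (c.Q_S T hd (hQ d hdd) (hQ u gu) (hQ u' gu')).2
  have Qa := hQ a ha
  have Qb := hQ b hb
  have Qd := hQ d hdd
  obtain ⟨f0, w0, hw0, e0⟩ := hf a a a (by simp) (by simp) (by simp)
  obtain ⟨f1, w1, hw1, e1⟩ := hf a a b (by simp) (by simp) (by simp)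
  obtain ⟨f2, w2, hw2, e2⟩ := hf a b b (by simp) (by simp) (by simp)
  obtain ⟨f3, w3, hw3, e3⟩ := hf b b b (by simp) (by simp) (by simp)
  obtain ⟨g0, i0⟩ := hg a a (by simp) (by simp)
  obtain ⟨g1, i1⟩ := hg a b (by simp) (by simp)
  obtain ⟨g2, i2⟩ := hg b b (by simp) (by simp)
  have s1 : S F (v a) (v b) (v a) = S F (v a) (v a) (v b) := by
    rw [c.S_12 T hd Qa Qb, c.S_13 T hd Qb Qa Qa]
  have s2 : S F (v b) (v a) (v a) = S F (v a) (v a) (v b) := c.S_13 T hd Qb Qa Qa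
  have s3 : S F (v b) (v a) (v b) = S F (v a) (v b) (v b) := c.S_12 T hd Qb Qa
  have s4 : S F (v b) (v b) (v a) = S F (v a) (v b) (v b) := c.S_13 T hd Qb Qb Qa
  have s5 : S F (v d) (v b) (v a) = S F (v d) (v a) (v b) := by
    rw [c.S_13 T hd Qd Qb Qa, c.S_12 T hd Qa Qb, c.S_13 T hd Qb Qa Qd]
  have zkill : ∀ w ∈ V z, ∀ i, ∀ y ∈ V i, ⁅w, y⁆ = 0 := by
    intro w hw i y hy
    by_contra h0
    obtain ⟨q, hq, -⟩ := c.nz hw hy h0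
    exact hzc i q hq
  have key : ∀ β : ℂ, (f0 + 3 * f1 * β + 3 * f2 * β ^ 2 + f3 * β ^ 3) * (g0 + 2 * g1 * β + g2 * β ^ 2) = 0 := by
    intro β
    set x := v a + β • v b with hx
    have Qx : Q H x := by
      refine ⟨add_mem Qa.1 (SMulMemClass.smul_mem β Qb.1), ?_⟩
      rw [hx, lie_add, lie_smul, Qa.2, Qb.2]; simp
    have hS := c.S_zero T hd Qx
    have exx : S F x x x = (f0 + 3 * f1 * β + 3 * f2 * β ^ 2 + f3 * β ^ 3) • v d + 
        (w0 + (3 * β) • w1 + (3 * β ^ 2) • w2 + β ^ 3 • w3) := by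
      have : S F x x x = S F (v a) (v a) (v a) + (β • S F (v a) (v a) (v b) + β • S F (v a) (v b) (v a)
          + β • S F (v b) (v a) (v a)) + (β ^ 2 • S F (v a) (v b) (v b) + β ^ 2 • S F (v b) (v a) (v b)
          + β ^ 2 • S F (v b) (v b) (v a)) + β ^ 3 • S F (v b) (v b) (v b) := by
        simp only [hx, S, lie_add, add_lie, lie_smul, smul_lie]
        module
      rw [this, s1, s2, s3, s4, e0, e1, e2, e3]
      module
    have hwz : w0 + (3 * β) • w1 + (3 * β ^ 2) • w2 + β ^ 3 • w3 ∈ V z :=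
      add_mem (add_mem (add_mem hw0 (Submodule.smul_mem _ _ hw1)) (Submodule.smul_mem _ _ hw2))
        (Submodule.smul_mem _ _ hw3)
    have hk : ∀ w ∈ V z, S F w x x = 0 := by
      intro w hw
      have : ⁅w, ⁅F, x⁆⁆ = 0 := by
        rw [hx, lie_add, lie_smul, lie_add, lie_smul, zkill w hw a _ (c.inv T.hF (hv a ha).1),
          zkill w hw b _ (c.inv T.hF (hv b hb).1)]
        simp
      rw [S, this, zero_lie]
    have hlin : ∀ (r : ℂ) (u w : g), S F (r • u + w) x x = r • S F u x x + S F w x x := by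
      intro r u w; simp only [S, add_lie, smul_lie]
    rw [exx, hlin, hk _ hwz, add_zero] at hS
    have edx : S F (v d) x x = (g0 + 2 * g1 * β + g2 * β ^ 2) • v z := by
      have : S F (v d) x x = S F (v d) (v a) (v a) + (β • S F (v d) (v a) (v b)
          + β • S F (v d) (v b) (v a)) + β ^ 2 • S F (v d) (v b) (v b) := by
        simp only [hx, S, lie_add, add_lie, lie_smul, smul_lie]
        module
      rw [this, s5, i0, i1, i2]
      module
    rw [edx, smul_smul] at hS
    exact (smul_eq_zero.1 hS).resolve_right (hv z hz).2.1
  -- pass to polynomials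
  rcases polyzero _ _ _ _ _ _ _ key with ⟨c0, c1, c2, c3⟩ | ⟨c0, c1, c2⟩
  · replace c1 : f1 = 0 := by simpa using c1
    replace c2 : f2 = 0 := by simpa using c2
    subst c0 c1 c2 c3
    rw [zero_smul, zero_add] at e0 e1 e2 e3
    obtain ⟨u, u', u'', t, hu, hu', hu'', ht, r1, r2⟩ := h3
    have gu := hgen u hu
    have gu' := hgen u' hu'
    have gu'' := hgen u'' hu''
    obtain ⟨n1, n2⟩ := c.S_ne T hd r1 ht r2 (hv u' gu').1 (hv u'' gu'').1 (hv u gu).1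
      (hQ _ gu') (hQ _ gu'') (hQ _ gu) (hv u' gu').2.2.2 (hv u'' gu'').2.2.2 (hv u gu).2.2.2
    have n3 : S F (v u') (v u'') (v u) ∈ V z := by
      rcases hu with rfl | rfl <;> rcases hu' with rfl | rfl <;> rcases hu'' with rfl | rfl <;>
        first
        | (rw [e0]; assumption)
        | (rw [e3]; assumption)
        | (rw [e1]; assumption)
        | (rw [e2]; assumption)
        | (rw [s1, e1]; assumption)
        | (rw [s2, e1]; assumption)
        | (rw [s3, e2]; assumption)
        | (rw [s4, e2]; assumption)
    exact hdz (c.disj n2 n3 n1)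
  · replace c1 : g1 = 0 := by simpa using c1
    subst c0 c1 c2
    rw [zero_smul] at i0 i1 i2
    obtain ⟨u, u', t, hu, hu', ht, r1, r2⟩ := h4
    have gu := hgen u hu
    have gu' := hgen u' hu'
    obtain ⟨n1, n2⟩ := c.S_ne T hd r1 ht r2 (hv d hdd).1 (hv u gu).1 (hv u' gu').1
      (hQ _ hdd) (hQ _ gu) (hQ _ gu') (hv d hdd).2.2.2 (hv u gu).2.2.2 (hv u' gu').2.2.2
    apply n1
    rcases hu with rfl | rfl <;> rcases hu' with rfl | rfl <;>
      first
      | exact i0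
      | exact i1
      | exact i2
      | exact s5.trans i1

theorem sys2 (c : Ctx s V) (T : Tri s H E F) (hsum : ∑ i, Module.finrank ℂ (V i) ≤ 11) : 
    Sys2 (fun i => Module.finrank ℂ (V i)) (Rel V) where
  toSys := c.sys
  T1 := fun h hi => c.T1 h hi
  T2 := fun h hi => c.T2 h hi
  L2 := fun h hi => c.L2 h hi
  L3 := fun h hi => c.L3 h hi (c.par T h)
  al := fun h ht _ hu h2 => c.al h ht hu h2
  al2 := fun h ht h2 => c.al2 h ht h2
  par := fun h => c.par T h
  gam := fun hb ha hc _ h1 h2 => c.gam T hb ha hc h1 h2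
  del := fun ha h1 ht h2 h3 => c.del T ha h1 ht h2 h3
  fg := c.fg T
  sum := hsum

theorem sl2case (c : Ctx s V) (T : Tri s H E F) (h3 : 3 ≤ Module.finrank ℂ s) : 15 ≤ Module.finrank ℂ g := by
  by_contra hlt
  have := c.sum_le
  exact (c.sys2 T (by omega)).false

end Ctx
end SympAux


namespace SympAux

theorem indep_finrank {ι M : Type*} [Fintype ι] [AddCommGroup M] [Module ℂ M]
    [FiniteDimensional ℂ M] (p : ι → Submodule ℂ M) (hp : iSupIndep p) :
    ∑ i, Module.finrank ℂ (p i) ≤ Module.finrank ℂ M := by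
  classical
  let f : (∀ i, p i) →ₗ[ℂ] M := LinearMap.lsum ℂ (fun i => p i) ℂ fun i => (p i).subtype
  have hf : ∀ v, f v = ∑ i, (v i : M) := by
    intro v
    simp [f, LinearMap.lsum_apply]
  have hinj : Function.Injective f := by
    rw [← LinearMap.ker_eq_bot, LinearMap.ker_eq_bot']
    intro v h0
    rw [hf] at h0
    have := (iSupIndep_iff_finsetSum_eq_zero_imp_eq_zero p).1 hp Finset.univ
      (fun i => (v i : M)) (fun i _ => (v i).2) h0
    funext i
    exact Subtype.ext (this i (Finset.mem_univ i))
  have := LinearMap.finrank_le_finrank_of_injective hinj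
  rwa [Module.finrank_pi_fintype] at this

section dich
open LieAlgebra LieAlgebra.IsKilling LieModule

variable {L : Type*} [LieRing L] [LieAlgebra ℂ L] [FiniteDimensional ℂ L] [IsKilling ℂ L]
  (C : LieSubalgebra ℂ L) [C.IsCartanSubalgebra]

theorem rank_add_card :
    Module.finrank ℂ C + (LieSubalgebra.root (H := C)).card ≤ Module.finrank ℂ L := by
  classical
  let w : Option (LieSubalgebra.root (H := C)) → (C → ℂ) := fun o => o.elim 0 (fun a => a.1)
  have hw : Function.Injective w := by
    rintro (_ | a) (_ | b) h
    · rfl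
    · exact absurd h.symm (C.isNonZero_coe_root b)
    · exact absurd h (C.isNonZero_coe_root a)
    · congr 1
      exact Subtype.ext (DFunLike.coe_injective h)
  have h1 := (iSupIndep_genWeightSpace ℂ C L).comp hw
  rw [← LieSubmodule.iSupIndep_toSubmodule] at h1
  have h2 := indep_finrank _ h1
  rw [Fintype.sum_option] at h2
  have h3 : ∀ a : LieSubalgebra.root (H := C), 
      Module.finrank ℂ (genWeightSpace L (w (some a))) = 1 := fun a =>
    finrank_rootSpace_eq_one a.1 (C.isNonZero_coe_root a)
  have h4 : Module.finrank ℂ (genWeightSpace L (w none)) = Module.finrank ℂ C := by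
    have : genWeightSpace L (w none) = C.toLieSubmodule := rootSpace_zero_eq ℂ L C
    rw [this]; rfl
  have h5 : ∑ a : LieSubalgebra.root (H := C),
      Module.finrank ℂ (genWeightSpace L (w (some a))) = (LieSubalgebra.root (H := C)).card := by
    rw [Finset.sum_congr rfl (fun a _ => h3 a)]; simp
  rw [← h4, ← h5]
  exact h2

theorem inj6 {M : Type*} [AddCommGroup M] [Module ℂ M] {a b c : M} (p : ℂ) (hp : p ≠ 0)
    (hc : c = a - p • b) (hab : LinearIndependent ℂ ![a, b]) :
    Function.Injective ![a, -a, b, -b, c, -c] := by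
  rw [LinearIndependent.pair_iff] at hab
  let f : Fin 6 → ℂ × ℂ := ![(1, 0), (-1, 0), (0, 1), (0, -1), (1, -p), (-1, p)]
  have hf : ∀ i, ![a, -a, b, -b, c, -c] i = (f i).1 • a + (f i).2 • b := by
    intro i
    fin_cases i <;> simp [f, hc]
    · abel
    · abel
  have hfi : Function.Injective f := by
    have h1 : (1 : ℂ) ≠ -1 := by norm_num
    have h2 : (-1 : ℂ) ≠ 1 := by norm_num
    clear hf hab hc
    intro i j h
    rw [Prod.ext_iff] at h
    obtain ⟨h3, h4⟩ := h
    fin_cases i <;> fin_cases j <;> first | rfl | (exfalso; simp [f, hp, h1, h2] at h3 h4; done) |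
      (exfalso; simp [f, hp, h1, h2] at h3 h4; exact hp h4.symm)
  intro i j h
  rw [hf, hf] at h
  apply hfi
  have := hab ((f i).1 - (f j).1) ((f i).2 - (f j).2) (by
    rw [sub_smul, sub_smul, sub_add_sub_comm, h, sub_self])
  exact Prod.ext (sub_eq_zero.1 this.1) (sub_eq_zero.1 this.2)

theorem exists_root [IsSimple ℂ L] : ∃ a, a ∈ LieSubalgebra.root (H := C) := by
  by_contra hc
  push Not at hc
  have h := cartan_sup_iSup_rootSpace_eq_top (K := ℂ) C
  have h0 : (⨆ α : Weight ℂ C L, ⨆ (_ : α.IsNonZero), rootSpace C α) = ⊥ := by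
    rw [eq_bot_iff]
    refine iSup_le fun α => iSup_le fun hα => ?_
    exact absurd (by simpa using hα) (hc α)
  rw [h0, sup_bot_eq] at h
  have hm : ∀ x : L, x ∈ C := fun x => by
    have : x ∈ C.toLieSubmodule := h ▸ LieSubmodule.mem_top x
    exact this
  refine IsSimple.non_abelian (R := ℂ) (L := L) ⟨fun x y => ?_⟩
  have := trivial_lie_zero C C ⟨x, hm x⟩ ⟨y, hm y⟩
  exact congrArg Subtype.val this

theorem dichotomy [IsSimple ℂ L] : (8 ≤ Module.finrank ℂ L) ∨
    (3 ≤ Module.finrank ℂ L ∧ ∃ h e f : L, IsSl2Triple h e f ∧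
      ∀ x : L, ∃ a b c : ℂ, x = a • e + b • f + c • h) := by
  classical
  obtain ⟨x, hx⟩ := exists_isCartanSubalgebra_engel ℂ L
  set C := LieSubalgebra.engel ℂ x
  obtain ⟨α0, hα0⟩ := exists_root C
  set α : LieSubalgebra.root (H := C) := ⟨α0, hα0⟩
  have hα := C.isNonZero_coe_root α
  have hrk := rank_add_card C
  set P := rootSystem C
  have hne : P.root α ≠ 0 := P.ne_zero α
  have hroots : ∀ t : Finset (Module.Dual ℂ C), (∀ x ∈ t, ∃ β, x = P.root β) →
      t.card ≤ (LieSubalgebra.root (H := C)).card := by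
    intro t ht
    have h1 : t ⊆ Finset.univ.image P.root := by
      intro x hx
      obtain ⟨b, rfl⟩ := ht x hx
      simp
    refine (Finset.card_le_card h1).trans (Finset.card_image_le.trans ?_)
    simp
  have hneg : ∀ β, ∃ β', - P.root β = P.root β' := fun β =>
    ⟨P.reflectionPerm β β, by rw [P.root_reflectionPerm, P.reflection_apply_self]⟩
  by_cases hC : Module.finrank ℂ C ≤ 1
  · right
    have hD : Module.finrank ℂ (Module.Dual ℂ C) ≤ 1 := by rwa [Subspace.dual_finrank_eq]
    obtain ⟨h, e, f, t, he, hf⟩ := exists_isSl2Triple_of_weight_isNonZero hα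
    have hh := t.h_eq_coroot hα he hf
    have hc0 : coroot α.1 ≠ 0 := by
      intro h0
      rw [h0] at hh
      exact t.h_ne_zero (by simpa using hh)
    have hC1 : Module.finrank ℂ C = 1 := by
      have := (Module.finrank_pos_iff_exists_ne_zero (R := ℂ) (M := C)).2 ⟨_, hc0⟩
      omega
    have h2 := hroots {P.root α, - P.root α} (by
      intro x hx
      simp only [Finset.mem_insert, Finset.mem_singleton] at hx
      rcases hx with rfl | rfl
      · exact ⟨α, rfl⟩
      · exact hneg α)
    rw [Finset.card_pair (by
      intro h
      have h2 : (2 : ℂ) • P.root α = 0 := by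
        rw [two_smul]; nth_rewrite 1 [h]; exact neg_add_cancel _
      exact hne ((smul_eq_zero.1 h2).resolve_left two_ne_zero))] at h2
    refine ⟨by omega, h, e, f, t, ?_⟩
    let S : Submodule ℂ L := Submodule.span ℂ {e, f, h}
    have hone : ∀ (β : Weight ℂ C L), β.IsNonZero → ∀ y ∈ rootSpace C β, y ≠ 0 →
        ∀ z ∈ rootSpace C β, ∃ c : ℂ, z = c • y := by
      intro β hβ y hy hy0 z hz
      obtain ⟨c, hc⟩ := (finrank_eq_one_iff_of_nonzero' (⟨y, hy⟩ : rootSpace C β)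
        (by simpa using hy0)).1 (finrank_rootSpace_eq_one β hβ) ⟨z, hz⟩
      exact ⟨c, (congrArg Subtype.val hc).symm⟩
    have hS : S = ⊤ := by
      have hT := congrArg LieSubmodule.toSubmodule (cartan_sup_iSup_rootSpace_eq_top (K := ℂ) C)
      rw [LieSubmodule.top_toSubmodule] at hT
      rw [eq_top_iff, ← hT]
      simp only [LieSubmodule.sup_toSubmodule, LieSubmodule.iSup_toSubmodule]
      refine sup_le ?_ (iSup_le fun β => iSup_le fun hβ => ?_)
      · intro z hz
        obtain ⟨c, hc⟩ := (finrank_eq_one_iff_of_nonzero' _ hc0).1 hC1 ⟨z, hz⟩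
        have : z = c • h := by
          rw [hh]; exact (congrArg Subtype.val hc).symm
        rw [this]
        exact Submodule.smul_mem _ _ (Submodule.subset_span (by simp))
      · intro z hz
        have hz' : z ∈ rootSpace C β := hz
        let β' : LieSubalgebra.root (H := C) := ⟨β, by simpa using hβ⟩
        obtain ⟨k, hk⟩ : ∃ k : ℂ, (β : C → ℂ) = k • (α.1 : C → ℂ) := by
          obtain ⟨v, hv⟩ := finrank_le_one_iff.1 hD
          obtain ⟨a, ha⟩ := hv (P.root α)
          obtain ⟨b, hb⟩ := hv (P.root β')
          have ha0 : a ≠ 0 := by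
            rintro rfl
            exact hne (by rw [← ha, zero_smul])
          refine ⟨b / a, ?_⟩
          have : P.root β' = (b / a) • P.root α := by
            rw [← ha, ← hb, smul_smul, div_mul_cancel₀ _ ha0]
          funext x
          exact congrArg (fun u : Module.Dual ℂ C => u x) this
        rcases eq_neg_or_eq_of_eq_smul α.1 β hβ k hk with h' | h'
        · have : (β : C → ℂ) = - (α.1 : C → ℂ) := by rw [h']; simp
          rw [← this] at hf
          obtain ⟨c, rfl⟩ := hone β hβ f hf t.f_ne_zero z hz'
          exact Submodule.smul_mem _ _ (Submodule.subset_span (by simp))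
        · subst h'
          obtain ⟨c, rfl⟩ := hone α.1 hβ e he t.e_ne_zero z hz'
          exact Submodule.smul_mem _ _ (Submodule.subset_span (by simp))
    intro x
    have hx : x ∈ S := hS ▸ Submodule.mem_top
    rw [Submodule.mem_span_triple] at hx
    obtain ⟨a, b, c, h⟩ := hx
    exact ⟨a, b, c, h.symm⟩
  · left
    have hq : Submodule.span ℂ {P.root α} ≠ ⊤ := by
      intro h
      have h1 := finrank_span_singleton (K := ℂ) hne
      rw [h, finrank_top, Subspace.dual_finrank_eq] at h1
      omega
    have hir : P.IsIrreducible := inferInstance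
    have hex : ∃ i, Submodule.span ℂ {P.root α} ∉ Module.End.invtSubmodule (P.reflection i : _ →ₗ[ℂ] _) := by
      by_contra hc
      push Not at hc
      exact hq (hir.eq_top_of_invtSubmodule_reflection _ hc (by simpa using hne))
    obtain ⟨β, hβ⟩ := hex
    have hβ' : P.reflection β (P.root α) ∉ Submodule.span ℂ {P.root α} := by
      intro h
      apply hβ
      rw [Module.End.mem_invtSubmodule, Submodule.span_le]
      simpa using h
    have hcr : P.root (P.reflectionPerm β α) = P.root α - P.coroot' β (P.root α) • P.root β := by
      rw [P.root_reflectionPerm, P.reflection_apply]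
    rw [P.reflection_apply] at hβ'
    set p := P.coroot' β (P.root α) with hpdef
    have hp : p ≠ 0 := by
      intro h
      rw [h] at hβ'
      exact hβ' (by simp)
    have hind : LinearIndependent ℂ ![P.root α, P.root β] := by
      rw [LinearIndependent.pair_iff' hne]
      intro a ha
      apply hβ'
      rw [← ha]
      have := Submodule.mem_span_singleton_self (R := ℂ) (P.root α)
      exact sub_mem this (Submodule.smul_mem _ _ (Submodule.smul_mem _ _ this))
    have h6 := hroots (Finset.univ.image ![P.root α, -P.root α, P.root β, -P.root β,
      P.root (P.reflectionPerm β α), -P.root (P.reflectionPerm β α)]) (by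
        intro x hx
        obtain ⟨i, -, rfl⟩ := Finset.mem_image.1 hx
        fin_cases i
        · exact ⟨_, rfl⟩
        · exact hneg _
        · exact ⟨_, rfl⟩
        · exact hneg _
        · exact ⟨_, rfl⟩
        · exact hneg _)
    rw [Finset.card_image_of_injective _ (inj6 p hp hcr hind)] at h6
    simp only [Finset.card_univ, Fintype.card_fin] at h6
    omega

end dich
variable {g : Type*} [LieRing g] [LieAlgebra ℂ g] [FiniteDimensional ℂ g]

namespace Ctx
variable {s : LieSubalgebra ℂ g} {k : ℕ} {V : Fin k → Submodule ℂ g}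

/-- The annihilator of `V i` in `s`. -/
def ann (c : Ctx s V) (i : Fin k) : LieIdeal ℂ s where
  carrier := {x | ∀ v ∈ V i, ⁅(x : g), v⁆ = 0}
  add_mem' := by
    intro a b ha hb v hv
    change ⁅(a : g) + (b : g), v⁆ = 0
    rw [add_lie, ha v hv, hb v hv, add_zero]
  zero_mem' := by
    intro v _
    exact zero_lie v
  smul_mem' := by
    intro r a ha v hv
    change ⁅r • (a : g), v⁆ = 0
    rw [smul_lie, ha v hv, smul_zero]
  lie_mem := by
    intro x m hm v hv
    have hm' : ∀ v ∈ V i, ⁅(m : g), v⁆ = 0 := hm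
    rw [LieSubalgebra.coe_bracket, lie_lie, hm' v hv, hm' _ (c.inv x.2 hv), lie_zero, sub_zero]

theorem not_two (c : Ctx s V) (h8 : 8 ≤ Module.finrank ℂ s) (i : Fin k) :
    Module.finrank ℂ (V i) ≠ 2 := by
  intro h2
  have hsimp := c.levi.1
  rcases hsimp.eq_bot_or_eq_top (c.ann i) with hb | ht
  · let f : s →ₗ[ℂ] (V i →ₗ[ℂ] V i) :=
      { toFun := fun x => 
          { toFun := fun v => ⟨⁅(x : g), (v : g)⁆, c.inv x.2 v.2⟩
            map_add' := fun a b => Subtype.ext (lie_add _ _ _)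
            map_smul' := fun r a => Subtype.ext (lie_smul _ _ _) }
        map_add' := fun x y => LinearMap.ext fun v => Subtype.ext (add_lie _ _ _)
        map_smul' := fun r x => LinearMap.ext fun v => Subtype.ext (smul_lie _ _ _) }
    have hinj : Function.Injective f := by
      rw [← LinearMap.ker_eq_bot, LinearMap.ker_eq_bot']
      intro x hx
      have : x ∈ c.ann i := by
        intro v hv
        exact congrArg Subtype.val (LinearMap.congr_fun hx ⟨v, hv⟩)
      rw [hb] at this
      exact (LieSubmodule.mem_bot x).1 this
    have := LinearMap.finrank_le_finrank_of_injective hinj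
    rw [Module.finrank_linearMap, h2] at this
    omega
  · obtain ⟨v, hv, hv0⟩ := c.ex i
    have hk : ∀ x ∈ s, ∀ w ∈ V i, ⁅x, w⁆ = 0 := by
      intro x hx w hw
      have : (⟨x, hx⟩ : s) ∈ c.ann i := ht ▸ LieSubmodule.mem_top _
      exact this w hw
    have hle : Submodule.span ℂ {v} ≤ V i := by
      rw [Submodule.span_le]; simpa using hv
    rcases c.irr (Submodule.span ℂ {v}) hle (fun x hx w hw => by
      rw [hk x hx w (hle hw)]; exact zero_mem _) with h | h
    · exact hv0 (by simpa using h)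
    · have h1 := finrank_span_singleton (K := ℂ) hv0
      rw [h] at h1
      omega

theorem bigcase (c : Ctx s V) (h8 : 8 ≤ Module.finrank ℂ s) : 15 ≤ Module.finrank ℂ g := by
  have hs := c.sum_le
  have S := c.sys
  have h3 : ∀ i, S.dep i = 1 → 3 ≤ Module.finrank ℂ (V i) := by
    intro i hi
    have h1 : 2 ≤ Module.finrank ℂ (V i) := S.gen2 hi
    have := c.not_two h8 i
    omega
  obtain ⟨A, B, hAB, hA, hB⟩ := S.twogen
  obtain ⟨y, x, q, hy, hr, hd⟩ := S.jump
  have hx := S.dep_pos x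
  have hqA : q ≠ A := by rintro rfl; omega
  have hqB : q ≠ B := by rintro rfl; omega
  have hq : 1 ≤ Module.finrank ℂ (V q) := S.npos q
  have hle : ∑ i ∈ ({A, B, q} : Finset (Fin k)), Module.finrank ℂ (V i) ≤
      ∑ i, Module.finrank ℂ (V i) :=
    Finset.sum_le_sum_of_subset (Finset.subset_univ _)
  rw [Finset.sum_insert (by simp [hAB, hqA.symm]), Finset.sum_pair hqB.symm] at hle
  have := h3 A hA
  have := h3 B hB
  omega

theorem main (c : Ctx s V) : 15 ≤ Module.finrank ℂ g := by
  have hsimp : LieAlgebra.IsSimple ℂ s := c.levi.1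
  rcases dichotomy (L := s) with h8 | ⟨h3, h, e, f, t, hsp⟩
  · exact c.bigcase h8
  · refine c.sl2case (H := (h : g)) (E := (e : g)) (F := (f : g)) ⟨⟨?_, ?_, ?_, ?_⟩, h.2, e.2, f.2, ?_⟩ h3
    · intro h0; exact t.h_ne_zero (Subtype.ext h0)
    · exact congrArg Subtype.val t.lie_e_f
    · exact congrArg Subtype.val t.lie_h_e_nsmul
    · exact congrArg Subtype.val t.lie_h_f_nsmul
    · intro x hx
      obtain ⟨a, b, r, hh⟩ := hsp ⟨x, hx⟩
      exact ⟨a, b, r, congrArg Subtype.val hh⟩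

end Ctx
end SympAux

/-- a non-semisimple sympathetic Lie algebra with simple Levi subalgebra,
whose radical decomposes into simple modules satisfying the convention, and such that the
centre of the radical is irreducible whenever there are at least 5 summands, has
dimension ≥ 15. -/
theorem stmt17 (g : Type*) [LieRing g] [LieAlgebra ℂ g] [FiniteDimensional ℂ g]
    (hsymp : Symp.IsSympathetic g)
    (hnss : LieAlgebra.radical ℂ g ≠ ⊥)
    (s : LieSubalgebra ℂ g) (hs : Symp.IsSimpleLevi g s)
    (k : ℕ) (V : Fin k → Submodule ℂ g) (hdec : Symp.IsDecomp g s V)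
    (hconv : Symp.Convention g V)
    (hk5 : 5 ≤ k → Symp.IsIrreducibleSMod g s (Symp.centerRad g)) :
    15 ≤ Module.finrank ℂ g := by
  exact SympAux.Ctx.main (s := s) (V := V) ⟨hsymp, hnss, hs, hdec, hconv⟩
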